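/- For all integers k ≥ 1, s ≥ 0, r ≥ 0 with s and r both even and s + r < k, GR_k((k−s−r)P3, sK3, rH3) = 2·5^(s/2)·17^(r/2) + 1. -/

import Mathlib

open SimpleGraph

/-- A rainbow triangle in an edge-coloring of a complete graph: three distinct
vertices whose three pairwise edges receive three pairwise distinct colors. -/
def HasRainbowTriangle {n k : ℕ} (c : Fin n → Fin n → Fin k) : Prop :=
  ∃ u v w : Fin n, u ≠ v ∧ u ≠ w ∧ v ≠ w ∧
    c u v ≠ c u w ∧ c u v ≠ c v w ∧ c u w ≠ c v w

/-- A Gallai `k`-coloring of `K_n`: a symmetric edge-coloring with no rainbow triangle. -/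
def IsGallaiColoring {n k : ℕ} (c : Fin n → Fin n → Fin k) : Prop :=
  (∀ u v, c u v = c v u) ∧ ¬ HasRainbowTriangle c

/-- A monochromatic copy of the graph `F` in color `i`: an injection of the vertices
of `F` into the vertices of `K_n` mapping every edge of `F` to an edge colored `i`. -/
def HasMonoCopy {V : Type} (F : SimpleGraph V) {n k : ℕ}
    (c : Fin n → Fin n → Fin k) (i : Fin k) : Prop :=
  ∃ f : V → Fin n, Function.Injective f ∧ ∀ a b, F.Adj a b → c (f a) (f b) = i

/-- The Gallai-Ramsey number `GR(F₁, …, F_k)`: the least `n` such that every Gallai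
`k`-coloring of `K_n` contains, for some color `i`, a monochromatic copy of `Fᵢ`
in color `i`. -/
noncomputable def GR (k : ℕ) (F : Fin k → Σ V : Type, SimpleGraph V) : ℕ :=
  sInf {n : ℕ | ∀ c : Fin n → Fin n → Fin k, IsGallaiColoring c →
    ∃ i : Fin k, HasMonoCopy (F i).2 c i}

/-- The triangle `K₃`. -/
def GK3 : SimpleGraph (Fin 3) := ⊤

/-- The path `P₃` on three vertices (edges 0–1 and 1–2). -/
def GP3 : SimpleGraph (Fin 3) := SimpleGraph.fromRel (fun a _ => a = 1)

/-- `H₁`: a `K₄` on `{0,1,2,3}` together with the extra vertex `4` adjacent to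
exactly the vertex `3`. -/
def GH1 : SimpleGraph (Fin 5) :=
  SimpleGraph.fromRel (fun a b => (a ≠ 4 ∧ b ≠ 4) ∨ (a = 3 ∧ b = 4))

/-- `H₂`: `K₅` minus the two edges 0–1 and 1–2 of a path on three vertices. -/
def GH2 : SimpleGraph (Fin 5) :=
  (⊤ : SimpleGraph (Fin 5)) \
    SimpleGraph.fromRel (fun a b => (a = 0 ∧ b = 1) ∨ (a = 1 ∧ b = 2))

/-- `H₃`: `K₅` minus the edge 0–1. -/
def GH3 : SimpleGraph (Fin 5) :=
  (⊤ : SimpleGraph (Fin 5)) \ SimpleGraph.fromRel (fun a b => a = 0 ∧ b = 1)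
/-- The family of graphs for `GR_k((k-s-r)P₃, sK₃, rH₃)`: the graph `H₃` in each of
the first `r` colors, the triangle `K₃` in each of the next `s` colors, and the path
`P₃` in each of the remaining `k - s - r` colors. -/
def mixPKH (k s r : ℕ) : Fin k → Σ V : Type, SimpleGraph V :=
  fun i =>
    if (i : ℕ) < r then ⟨Fin 5, GH3⟩
    else if (i : ℕ) < r + s then ⟨Fin 3, GK3⟩
    else ⟨Fin 3, GP3⟩


namespace GRaux

section Basic

open scoped Classical

variable {V κ : Type*}

/-- No rainbow triangle, symmetric. -/
def Gal (c : V → V → κ) : Prop :=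
  (∀ u v, c u v = c v u) ∧ ∀ u v w, u ≠ v → u ≠ w → v ≠ w →
    c u v = c u w ∨ c u v = c v w ∨ c u w = c v w

/-- Neighbours of `x` in `U` in color `i`. -/
noncomputable def nb (c : V → V → κ) (i : κ) (U : Finset V) (x : V) : Finset V :=
  U.filter (fun y => y ≠ x ∧ c x y = i)

/-- `Bad c i n U`: the set `U` contains a copy of `K_{n+2}` minus an edge in color `i`. -/
def Bad (c : V → V → κ) (i : κ) : ℕ → Finset V → Prop
  | 0, U => 2 ≤ U.card
  | n + 1, U => ∃ x ∈ U, Bad c i n (nb c i U x)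

theorem mem_nb {c : V → V → κ} {i : κ} {U : Finset V} {x y : V} :
    y ∈ nb c i U x ↔ y ∈ U ∧ y ≠ x ∧ c x y = i := by
  simp [nb]

theorem nb_mono {c : V → V → κ} {i : κ} {U W : Finset V} (h : U ⊆ W) (x : V) :
    nb c i U x ⊆ nb c i W x := by
  intro y hy
  rw [mem_nb] at hy ⊢
  exact ⟨h hy.1, hy.2⟩

theorem Bad.mono {c : V → V → κ} {i : κ} {n : ℕ} : ∀ {U W : Finset V}, U ⊆ W →
    Bad c i n U → Bad c i n W := by
  induction n with
  | zero => intro U W h hb; exact le_trans hb (Finset.card_le_card h)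
  | succ n ih =>
    rintro U W h ⟨x, hx, hb⟩
    exact ⟨x, h hx, ih (nb_mono h x) hb⟩

theorem Bad.down {c : V → V → κ} {i : κ} {n : ℕ} {U : Finset V} (h : Bad c i (n + 1) U) :
    Bad c i n U := by
  obtain ⟨x, _, hb⟩ := h
  exact hb.mono (Finset.filter_subset _ _)

/-- one common neighbour -/
theorem Bad.up {c : V → V → κ} {i : κ} {n : ℕ} {U A : Finset V} {x : V} (hx : x ∈ U)
    (hA : ∀ y ∈ A, y ∈ U ∧ y ≠ x ∧ c x y = i) (h : Bad c i n A) : Bad c i (n + 1) U :=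
  ⟨x, hx, h.mono (fun y hy => mem_nb.2 (hA y hy))⟩

/-- two adjacent common neighbours -/
theorem Bad.up2 {c : V → V → κ} {i : κ} {n : ℕ} {U A : Finset V} {x y : V} (hx : x ∈ U)
    (hy : y ∈ U) (hxy : y ≠ x) (hc : c x y = i)
    (hA : ∀ z ∈ A, z ∈ U ∧ z ≠ x ∧ z ≠ y ∧ c x z = i ∧ c y z = i) (h : Bad c i n A) :
    Bad c i (n + 2) U := by
  refine ⟨x, hx, y, mem_nb.2 ⟨hy, hxy, hc⟩, h.mono (fun z hz => ?_)⟩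
  obtain ⟨h1, h2, h3, h4, h5⟩ := hA z hz
  exact mem_nb.2 ⟨mem_nb.2 ⟨h1, h2, h4⟩, h3, h5⟩

/-- no edges implies level 1 free -/
theorem not_bad_one_of_no_edge {c : V → V → κ} {i : κ} {U : Finset V}
    (h : ∀ x ∈ U, ∀ y ∈ U, x ≠ y → c x y ≠ i) : ¬ Bad c i 1 U := by
  rintro ⟨x, hx, hb⟩
  change 2 ≤ (nb c i U x).card at hb
  obtain ⟨y, hy⟩ := Finset.card_pos.1 (by omega : 0 < (nb c i U x).card)
  rw [mem_nb] at hy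
  exact h x hx y hy.1 hy.2.1.symm hy.2.2

/-! ### Gallai's theorem -/

/-- reachability inside `U` in color `a` -/
def Rch (c : V → V → κ) (U : Finset V) (a : κ) : V → V → Prop :=
  Relation.ReflTransGen (fun x y => x ∈ U ∧ y ∈ U ∧ x ≠ y ∧ c x y = a)

theorem Rch.symm {c : V → V → κ} (hc : Gal c) {U : Finset V} {a : κ} {x y : V}
    (h : Rch c U a x y) : Rch c U a y x := by
  induction h with
  | refl => exact Relation.ReflTransGen.refl
  | tail _ h ih =>
    exact Relation.ReflTransGen.head ⟨h.2.1, h.1, h.2.2.1.symm, by rw [hc.1]; exact h.2.2.2⟩ ih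

theorem Rch.trans {c : V → V → κ} {U : Finset V} {a : κ} {x y z : V}
    (h : Rch c U a x y) (h' : Rch c U a y z) : Rch c U a x z :=
  Relation.ReflTransGen.trans h h'

theorem Rch.module {c : V → V → κ} (hc : Gal c) {U : Finset V} {a : κ} {x y v : V}
    (hv : v ∈ U) (h : Rch c U a x y) (hn : ¬ Rch c U a x v) : c v x = c v y := by
  induction h with
  | refl => rfl
  | @tail y z hxy h ih =>
    rw [ih]
    obtain ⟨hy, hz, hyz, hcol⟩ := h
    have hxz : Rch c U a x z := Relation.ReflTransGen.tail hxy ⟨hy, hz, hyz, hcol⟩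
    have hvy : v ≠ y := by rintro rfl; exact hn hxy
    have hvz : v ≠ z := by rintro rfl; exact hn hxz
    have h1 : c v y ≠ a := fun h =>
      hn (Relation.ReflTransGen.tail hxy ⟨hy, hv, hvy.symm, by rw [hc.1]; exact h⟩)
    have h2 : c v z ≠ a := fun h =>
      hn (Relation.ReflTransGen.tail hxz ⟨hz, hv, hvz.symm, by rw [hc.1]; exact h⟩)
    rcases hc.2 v y z hvy hvz hyz with h | h | h
    · exact h
    · exact absurd (h.trans hcol) h1
    · exact absurd (h.trans hcol) h2

theorem Rch.first {c : V → V → κ} {U : Finset V} {a : κ} {x y : V}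
    (h : Rch c U a x y) (hne : x ≠ y) : ∃ z ∈ U, z ≠ x ∧ c x z = a := by
  rcases Relation.ReflTransGen.cases_head h with h | ⟨z, hz, _⟩
  · exact absurd h hne
  · exact ⟨z, hz.2.1, hz.2.2.1.symm, hz.2.2.2⟩

theorem Rch.erase {c : V → V → κ} {U : Finset V} {a : κ} {u v : V}
    (h : Rch c U a u v) : u ≠ v →
    ∃ y ∈ U.erase v, Rch c (U.erase v) a u y ∧ c y v = a := by
  induction h using Relation.ReflTransGen.head_induction_on with
  | refl => intro h; exact absurd rfl h
  | @head u w huw _ ih =>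
    intro hne
    obtain ⟨hu, hw, huw', hcol⟩ := huw
    by_cases hwv : w = v
    · subst hwv
      exact ⟨u, Finset.mem_erase.2 ⟨hne, hu⟩, Relation.ReflTransGen.refl, hcol⟩
    · obtain ⟨y, hy, hr, hcy⟩ := ih hwv
      exact ⟨y, hy, Relation.ReflTransGen.head
        ⟨Finset.mem_erase.2 ⟨hne, hu⟩, Finset.mem_erase.2 ⟨hwv, hw⟩, huw', hcol⟩ hr, hcy⟩

theorem two_at_vertex {c : V → V → κ} (hc : Gal c) {U : Finset V} {e : κ} {v : V} (hv : v ∈ U)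
    (hcon : ∀ x ∈ U, ∀ y ∈ U, Rch c U e x y) {z w : V} (hz : z ∈ U.erase v)
    (hw : w ∈ U.erase v) (hzw : ¬ Rch c (U.erase v) e z w) {x x' : V}
    (hx : x ∈ U.erase v) (hx' : x' ∈ U.erase v) (hxe : c v x ≠ e) (hxe' : c v x' ≠ e) :
    c v x = c v x' := by
  have key : ∀ x ∈ U.erase v, c v x ≠ e → ∀ w ∈ U.erase v, ¬ Rch c (U.erase v) e w x →
      c x w = c v x := by
    intro x hx hxe w hw hwx
    obtain ⟨hwv, hwU⟩ := Finset.mem_erase.1 hw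
    obtain ⟨hxv, hxU⟩ := Finset.mem_erase.1 hx
    obtain ⟨y, hy, hwy, hyv⟩ := (hcon w hwU v hv).erase hwv
    obtain ⟨hyv', hyU⟩ := Finset.mem_erase.1 hy
    have hm := Rch.module hc hx hwy hwx
    rw [hm]
    have hyx : ¬ Rch c (U.erase v) e y x := fun h => hwx (hwy.trans h)
    have hne : x ≠ y := by rintro rfl; exact hwx hwy
    have h1 : c x y ≠ e := fun h =>
      hyx (Relation.ReflTransGen.single ⟨hy, hx, hne.symm, by rw [hc.1]; exact h⟩)
    rcases hc.2 v x y hxv.symm hyv'.symm hne with h | h | h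
    · exact absurd (h.trans ((hc.1 v y).trans hyv)) hxe
    · exact h.symm
    · exact absurd (h.symm.trans ((hc.1 v y).trans hyv)) h1
  have hex : ∀ x, ∃ w ∈ U.erase v, ¬ Rch c (U.erase v) e w x := by
    intro x
    by_cases h : Rch c (U.erase v) e z x
    · refine ⟨w, hw, fun h' => hzw (h.trans (h'.symm hc))⟩
    · exact ⟨z, hz, h⟩
  by_cases hxx : Rch c (U.erase v) e x x'
  · obtain ⟨w, hw, hwx⟩ := hex x
    have h1 := key x hx hxe w hw hwx
    have h2 := key x' hx' hxe' w hw (fun h => hwx (h.trans (hxx.symm hc)))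
    have h3 := Rch.module hc hw hxx (fun h => hwx (h.symm hc))
    rw [← h1, ← h2, hc.1 x w, hc.1 x' w, h3]
  · have h1 := key x hx hxe x' hx' (fun h => hxx (h.symm hc))
    have h2 := key x' hx' hxe' x hx hxx
    rw [← h1, ← h2, hc.1]

theorem three_connected {c : V → V → κ} (hc : Gal c) : ∀ (n : ℕ) (U : Finset V), U.card = n →
    2 ≤ n → ∀ col : Fin 3 → κ, Function.Injective col →
    (∀ i, ∀ x ∈ U, ∀ y ∈ U, Rch c U (col i) x y) → False := by
  intro n
  induction n with
  | zero => intro U _ h; omega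
  | succ n ih =>
    intro U hU hn col hinj hcon
    obtain ⟨v, hv⟩ := Finset.card_pos.1 (by omega : 0 < U.card)
    have hcard : (U.erase v).card = n := by rw [Finset.card_erase_of_mem hv]; omega
    have hat : ∀ i, ∃ z ∈ U.erase v, c v z = col i := by
      intro i
      obtain ⟨u, hu⟩ := Finset.card_pos.1 (by omega : 0 < (U.erase v).card)
      obtain ⟨huv, huU⟩ := Finset.mem_erase.1 hu
      obtain ⟨z, hz, hzv, hcz⟩ := (hcon i v hv u huU).first huv.symm
      exact ⟨z, Finset.mem_erase.2 ⟨hzv, hz⟩, hcz⟩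
    by_cases hall : ∀ i, ∀ x ∈ U.erase v, ∀ y ∈ U.erase v, Rch c (U.erase v) (col i) x y
    · by_cases h2 : 2 ≤ n
      · exact ih (U.erase v) hcard h2 col hinj hall
      · obtain ⟨u, hu⟩ := Finset.card_eq_one.1 (by omega : (U.erase v).card = 1)
        obtain ⟨z, hz, h0⟩ := hat 0
        obtain ⟨z', hz', h1⟩ := hat 1
        rw [hu, Finset.mem_singleton] at hz hz'
        subst hz; subst hz'
        have := hinj (h0.symm.trans h1)
        exact absurd this (by decide)
    · push Not at hall
      obtain ⟨i, z, hz, w, hw, hzw⟩ := hall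
      obtain ⟨j, l, hj, hl, hjl⟩ : ∃ j l : Fin 3, j ≠ i ∧ l ≠ i ∧ j ≠ l :=
        (by decide : ∀ i : Fin 3, ∃ j l : Fin 3, j ≠ i ∧ l ≠ i ∧ j ≠ l) i
      obtain ⟨x, hx, hxj⟩ := hat j
      obtain ⟨y, hy, hyl⟩ := hat l
      have := two_at_vertex hc hv (hcon i) hz hw hzw hx hy
        (by rw [hxj]; exact fun h => hj (hinj h)) (by rw [hyl]; exact fun h => hl (hinj h))
      rw [hxj, hyl] at this
      exact hjl (hinj this)

/-- A Gallai partition. -/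
def GP (c : V → V → κ) (U : Finset V) : Prop :=
  ∃ φ : V → V, (∀ x ∈ U, φ x ∈ U ∧ φ (φ x) = φ x) ∧ (∃ x ∈ U, ∃ y ∈ U, φ x ≠ φ y) ∧
    ∃ a b : κ, ∀ x ∈ U, ∀ y ∈ U, φ x ≠ φ y →
      c x y = c (φ x) (φ y) ∧ (c x y = a ∨ c x y = b)

theorem two_colors {c : V → V → κ} (hc : Gal c) {U : Finset V} (hU : 2 ≤ U.card)
    (h : ∀ x ∈ U, ∀ y ∈ U, x ≠ y → ∀ z ∈ U, ∀ w ∈ U, Rch c U (c x y) z w) :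
    ∃ a b : κ, ∀ x ∈ U, ∀ y ∈ U, x ≠ y → c x y = a ∨ c x y = b := by
  by_contra hno
  push Not at hno
  obtain ⟨u, hu, v, hv, huv⟩ := Finset.one_lt_card.1 hU
  obtain ⟨x, hx, y, hy, hxy, h1, _⟩ := hno (c u v) (c u v)
  obtain ⟨x', hx', y', hy', hxy', h1', h2'⟩ := hno (c u v) (c x y)
  refine three_connected hc _ U rfl hU ![c u v, c x y, c x' y'] ?_ ?_
  · intro i j hij
    fin_cases i <;> fin_cases j <;> simp_all
  · intro i
    fin_cases i
    · exact h u hu v hv huv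
    · exact h x hx y hy hxy
    · exact h x' hx' y' hy' hxy'

theorem gallai {c : V → V → κ} (hc : Gal c) : ∀ (n : ℕ) (U : Finset V), U.card = n → 2 ≤ n →
    GP c U := by
  intro n
  induction n using Nat.strong_induction_on with
  | _ n ih =>
  intro U hU hn
  by_cases hdis : ∀ x ∈ U, ∀ y ∈ U, x ≠ y → ∀ z ∈ U, ∀ w ∈ U, Rch c U (c x y) z w
  · obtain ⟨a, b, hab⟩ := two_colors hc (by omega) hdis
    obtain ⟨u, hu, v, hv, huv⟩ := Finset.one_lt_card.1 (by omega : 1 < U.card)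
    exact ⟨id, fun x hx => ⟨hx, rfl⟩, ⟨u, hu, v, hv, huv⟩, a, b,
      fun x hx y hy hxy => ⟨rfl, hab x hx y hy hxy⟩⟩
  · push Not at hdis
    obtain ⟨x, hx, y, hy, hxy, z, hz, w, hw, hzw⟩ := hdis
    set a := c x y with ha
    let S : Setoid V := ⟨Rch c U a, fun _ => Relation.ReflTransGen.refl,
      fun h => h.symm hc, fun h h' => h.trans h'⟩
    let ψ : V → V := fun v => (Quotient.mk S v).out
    have hψ : ∀ v, Rch c U a (ψ v) v := fun v => Quotient.mk_out (s := S) v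
    have hψeq : ∀ {u v}, Rch c U a u v → ψ u = ψ v := by
      intro u v h
      have : Quotient.mk S u = Quotient.mk S v := Quotient.sound h
      simp only [ψ, this]
    have hψU : ∀ v ∈ U, ψ v ∈ U := by
      intro v hv
      rcases Relation.ReflTransGen.cases_head (hψ v) with h | ⟨t, ht, _⟩
      · rw [h]; exact hv
      · exact ht.1
    have hψψ : ∀ v, ψ (ψ v) = ψ v := fun v => hψeq (hψ v)
    have hψne : ∀ {u v}, ψ u ≠ ψ v → ¬ Rch c U a u v := fun h h' => h (hψeq h')
    have hcol : ∀ u ∈ U, ∀ v ∈ U, ψ u ≠ ψ v → c u v = c (ψ u) (ψ v) := by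
      intro u hu v hv huv
      have h1 : c u v = c u (ψ v) := Rch.module hc hu ((hψ v).symm hc)
        (fun h => hψne huv (h.symm hc))
      have h2 : c (ψ v) u = c (ψ v) (ψ u) := Rch.module hc (hψU v hv) ((hψ u).symm hc)
        (fun h => huv ((hψeq h).trans (hψψ v)))
      rw [h1, hc.1, h2, hc.1]
    have hsub : U.image ψ ⊆ U := by
      intro t ht
      obtain ⟨s, hs, rfl⟩ := Finset.mem_image.1 ht
      exact hψU s hs
    have hlt : (U.image ψ).card < n := by
      rw [← hU]
      refine lt_of_le_of_ne Finset.card_image_le (fun heq => ?_)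
      have hinj := Finset.card_image_iff.1 heq
      exact hxy (hinj hx hy (hψeq (Relation.ReflTransGen.single ⟨hx, hy, hxy, rfl⟩)))
    have hge : 2 ≤ (U.image ψ).card := by
      apply Finset.one_lt_card.2
      exact ⟨ψ z, Finset.mem_image_of_mem _ hz, ψ w, Finset.mem_image_of_mem _ hw,
        fun h => hzw (((hψ z).symm hc).trans (h ▸ hψ w))⟩
    obtain ⟨φ, h1, ⟨p, hp, q, hq, hpq⟩, a', b', h2⟩ := ih _ hlt _ rfl hge
    have hfix : ∀ t ∈ U.image ψ, ψ t = t := by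
      intro t ht
      obtain ⟨s, hs, rfl⟩ := Finset.mem_image.1 ht
      exact hψψ s
    refine ⟨fun t => φ (ψ t), ?_, ⟨p, hsub hp, q, hsub hq, ?_⟩, a', b', ?_⟩
    · intro t ht
      have := h1 (ψ t) (Finset.mem_image_of_mem _ ht)
      refine ⟨hsub this.1, ?_⟩
      simp only
      rw [hfix _ this.1, this.2]
    · simp only
      rw [hfix p hp, hfix q hq]; exact hpq
    · intro s hs t ht hst
      have := h2 (ψ s) (Finset.mem_image_of_mem _ hs) (ψ t) (Finset.mem_image_of_mem _ ht) hst
      have hne : ψ s ≠ ψ t := fun h => hst (by simp only [h])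
      rw [hcol s hs t ht hne]
      exact this

end Basic

section Ramsey

open scoped Classical

variable {V κ : Type*}

/-- monochromatic clique of size `m` in color `i` inside `T` -/
def Cl (c : V → V → κ) (i : κ) (m : ℕ) (T : Finset V) : Prop :=
  ∃ S ⊆ T, S.card = m ∧ ∀ x ∈ S, ∀ y ∈ S, x ≠ y → c x y = i

/-- only two colors on `T` -/
def TC (c : V → V → κ) (a b : κ) (T : Finset V) : Prop :=
  ∀ x ∈ T, ∀ y ∈ T, x ≠ y → c x y = a ∨ c x y = b

theorem TC.sub {c : V → V → κ} {a b : κ} {T T' : Finset V} (h : TC c a b T) (hs : T' ⊆ T) :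
    TC c a b T' := fun x hx y hy => h x (hs hx) y (hs hy)

theorem TC.symm {c : V → V → κ} {a b : κ} {T : Finset V} (h : TC c a b T) : TC c b a T :=
  fun x hx y hy hxy => (h x hx y hy hxy).symm

theorem nb_sub {c : V → V → κ} {i : κ} {U : Finset V} {x : V} : nb c i U x ⊆ U :=
  Finset.filter_subset _ _

theorem Cl.sub {c : V → V → κ} {i : κ} {m : ℕ} {T T' : Finset V} (h : Cl c i m T)
    (hs : T ⊆ T') : Cl c i m T' := by
  obtain ⟨S, h1, h2⟩ := h
  exact ⟨S, h1.trans hs, h2⟩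

theorem Cl.cons {c : V → V → κ} (hc : ∀ u v, c u v = c v u) {i : κ} {m : ℕ} {T : Finset V}
    {x : V} (hx : x ∈ T) (h : Cl c i m (nb c i T x)) : Cl c i (m + 1) T := by
  obtain ⟨S, h1, h2, h3⟩ := h
  have hxS : x ∉ S := fun h => (mem_nb.1 (h1 h)).2.1 rfl
  refine ⟨insert x S, ?_, ?_, ?_⟩
  · intro y hy
    rcases Finset.mem_insert.1 hy with rfl | hy
    · exact hx
    · exact nb_sub (h1 hy)
  · rw [Finset.card_insert_of_notMem hxS, h2]
  · intro y hy z hz hyz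
    rcases Finset.mem_insert.1 hy with rfl | hy1 <;> rcases Finset.mem_insert.1 hz with rfl | hz1
    · exact absurd rfl hyz
    · exact (mem_nb.1 (h1 hz1)).2.2
    · rw [hc]; exact (mem_nb.1 (h1 hy1)).2.2
    · exact h3 y hy1 z hz1 hyz

theorem card_le_nb {c : V → V → κ} {a b : κ} {W : Finset V} {x : V}
    (h : ∀ y ∈ W, y ≠ x → c x y = a ∨ c x y = b) :
    W.card ≤ 1 + (nb c a W x).card + (nb c b W x).card := by
  have : W ⊆ ({x} ∪ nb c a W x) ∪ nb c b W x := by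
    intro y hy
    by_cases hyx : y = x
    · simp [hyx]
    · rcases h y hy hyx with h | h
      · simp [mem_nb, hy, hyx, h]
      · simp [mem_nb, hy, hyx, h]
  refine (Finset.card_le_card this).trans ((Finset.card_union_le _ _).trans ?_)
  have := Finset.card_union_le {x} (nb c a W x)
  simp only [Finset.card_singleton] at this
  omega

theorem TC.deg {c : V → V → κ} {a b : κ} {T : Finset V} (h : TC c a b T) {x : V} (hx : x ∈ T) :
    T.card ≤ 1 + (nb c a T x).card + (nb c b T x).card :=
  card_le_nb (fun y hy hyx => h x hx y hy hyx.symm)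

theorem ramsey2 {c : V → V → κ} (hc : ∀ u v, c u v = c v u) {a b : κ} {T : Finset V}
    (h : TC c a b T) {m : ℕ} (hm : m ≤ T.card) : Cl c a 2 T ∨ Cl c b m T := by
  by_cases hex : ∃ x ∈ T, ∃ y ∈ T, x ≠ y ∧ c x y = a
  · left
    obtain ⟨x, hx, y, hy, hxy, hcol⟩ := hex
    refine Cl.cons hc hx ⟨{y}, ?_, by simp, by simp⟩
    simp [mem_nb, hy, hxy.symm, hcol]
  · right
    push Not at hex
    obtain ⟨S, hS, hSc⟩ := Finset.exists_subset_card_eq hm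
    exact ⟨S, hS, hSc, fun x hx y hy hxy =>
      (h x (hS hx) y (hS hy) hxy).resolve_left (hex x (hS hx) y (hS hy) hxy)⟩

theorem ramsey33 {c : V → V → κ} (hc : ∀ u v, c u v = c v u) {a b : κ} {T : Finset V}
    (h : TC c a b T) (hm : 6 ≤ T.card) : Cl c a 3 T ∨ Cl c b 3 T := by
  obtain ⟨x, hx⟩ := Finset.card_pos.1 (by omega : 0 < T.card)
  have hd := h.deg hx
  by_cases h3 : 3 ≤ (nb c a T x).card
  · rcases ramsey2 hc (h.sub nb_sub) h3 with h' | h'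
    · exact Or.inl (h'.cons hc hx)
    · exact Or.inr (h'.sub nb_sub)
  · rcases ramsey2 hc (h.symm.sub nb_sub) (by omega : 3 ≤ (nb c b T x).card) with h' | h'
    · exact Or.inr (h'.cons hc hx)
    · exact Or.inl (h'.sub nb_sub)

theorem handshake {c : V → V → κ} (hc : ∀ u v, c u v = c v u) (a : κ) (T : Finset V) :
    Even (∑ x ∈ T, (nb c a T x).card) := by
  induction T using Finset.induction_on with
  | empty => simp
  | insert v T hv ih =>
    have h0 : nb c a (insert v T) v = nb c a T v := by
      ext y; simp only [mem_nb, Finset.mem_insert]; tauto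
    have h1 : ∀ x ∈ T, (nb c a (insert v T) x).card
        = (nb c a T x).card + if c v x = a then 1 else 0 := by
      intro x hx
      have hvx : v ≠ x := by rintro rfl; exact hv hx
      split_ifs with h
      · have : nb c a (insert v T) x = insert v (nb c a T x) := by
          ext y; simp only [mem_nb, Finset.mem_insert]
          constructor
          · tauto
          · rintro (rfl | h')
            · exact ⟨Or.inl rfl, hvx, by rw [hc]; exact h⟩
            · tauto
        rw [this, Finset.card_insert_of_notMem]
        intro h'; exact hv (mem_nb.1 h').1
      · have : nb c a (insert v T) x = nb c a T x := by
          ext y; simp only [mem_nb, Finset.mem_insert]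
          constructor
          · rintro ⟨rfl | h1, h2, h3⟩
            · exact absurd (by rw [hc]; exact h3) h
            · exact ⟨h1, h2, h3⟩
          · tauto
        rw [this, add_zero]
    rw [Finset.sum_insert hv, h0, Finset.sum_congr rfl h1, Finset.sum_add_distrib]
    have h2 : ∑ x ∈ T, (if c v x = a then 1 else 0) = (nb c a T v).card := by
      rw [← Finset.card_filter]
      congr 1
      ext y
      simp only [mem_nb, Finset.mem_filter]
      constructor
      · rintro ⟨hy1, hy2⟩
        exact ⟨hy1, by rintro rfl; exact hv hy1, hy2⟩
      · tauto
    rw [h2]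
    obtain ⟨r, hr⟩ := ih
    exact ⟨(nb c a T v).card + r, by omega⟩

theorem ramsey34 {c : V → V → κ} (hc : ∀ u v, c u v = c v u) {a b : κ} {T : Finset V}
    (h : TC c a b T) (hm : 9 ≤ T.card) : Cl c a 3 T ∨ Cl c b 4 T := by
  by_contra hno
  push Not at hno
  obtain ⟨T', hT', hcard⟩ := Finset.exists_subset_card_eq hm
  have h' := h.sub hT'
  have hdeg : ∀ x ∈ T', (nb c a T' x).card = 3 := by
    intro x hx
    have hd := h'.deg hx
    have h1 : ¬ 4 ≤ (nb c a T' x).card := by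
      intro h4
      rcases ramsey2 hc (h'.sub nb_sub) h4 with h5 | h5
      · exact hno.1 ((h5.cons hc hx).sub hT')
      · exact hno.2 (h5.sub (nb_sub.trans hT'))
    have h2 : ¬ 6 ≤ (nb c b T' x).card := by
      intro h4
      rcases ramsey33 hc (h'.sub nb_sub) h4 with h5 | h5
      · exact hno.1 (h5.sub (nb_sub.trans hT'))
      · exact hno.2 ((h5.cons hc hx).sub hT')
    omega
  have := handshake hc a T'
  rw [Finset.sum_congr rfl hdeg, Finset.sum_const, hcard] at this
  exact absurd this (by decide)

theorem ramsey44 {c : V → V → κ} (hc : ∀ u v, c u v = c v u) {a b : κ} {T : Finset V}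
    (h : TC c a b T) (hm : 18 ≤ T.card) : Cl c a 4 T ∨ Cl c b 4 T := by
  obtain ⟨x, hx⟩ := Finset.card_pos.1 (by omega : 0 < T.card)
  have hd := h.deg hx
  by_cases h3 : 9 ≤ (nb c a T x).card
  · rcases ramsey34 hc (h.sub nb_sub) h3 with h' | h'
    · exact Or.inl (h'.cons hc hx)
    · exact Or.inr (h'.sub nb_sub)
  · rcases ramsey34 hc (h.symm.sub nb_sub) (by omega : 9 ≤ (nb c b T x).card) with h' | h'
    · exact Or.inr (h'.cons hc hx)
    · exact Or.inl (h'.sub nb_sub)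

/-! ### Two colors plus a matching of twins -/

/-- pairs not colored `a` or `b` are twins, and form a matching -/
def Tw (c : V → V → κ) (a b : κ) (W : Finset V) : Prop :=
  ∀ x ∈ W, ∀ y ∈ W, x ≠ y → c x y ≠ a → c x y ≠ b → ∀ z ∈ W, z ≠ x → z ≠ y →
    c x z = c y z ∧ (c x z = a ∨ c x z = b)

/-- `x` has no twin in `W` -/
def Sg (c : V → V → κ) (a b : κ) (W : Finset V) (x : V) : Prop :=
  ∀ y ∈ W, y ≠ x → c x y = a ∨ c x y = b

theorem Tw.sub {c : V → V → κ} {a b : κ} {W W' : Finset V} (h : Tw c a b W) (hs : W' ⊆ W) :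
    Tw c a b W' := fun x hx y hy h1 h2 h3 z hz => h x (hs hx) y (hs hy) h1 h2 h3 z (hs hz)

theorem Tw.symm {c : V → V → κ} {a b : κ} {W : Finset V} (h : Tw c a b W) : Tw c b a W :=
  fun x hx y hy h1 h2 h3 z hz h4 h5 =>
    ⟨(h x hx y hy h1 h3 h2 z hz h4 h5).1, (h x hx y hy h1 h3 h2 z hz h4 h5).2.symm⟩

theorem Sg.sub {c : V → V → κ} {a b : κ} {W W' : Finset V} {x : V} (h : Sg c a b W x)
    (hs : W' ⊆ W) : Sg c a b W' x := fun y hy => h y (hs hy)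

theorem Sg.symm {c : V → V → κ} {a b : κ} {W : Finset V} {x : V} (h : Sg c a b W x) :
    Sg c b a W x := fun y hy hyx => (h y hy hyx).symm

/-- non-`b` pairs form a matching -/
def Mt (c : V → V → κ) (b : κ) (W : Finset V) : Prop :=
  ∀ x ∈ W, ∀ y ∈ W, ∀ z ∈ W, y ≠ x → z ≠ x → c x y ≠ b → c x z ≠ b → y = z

theorem Mt.bad {c : V → V → κ} (hc : ∀ u v, c u v = c v u) {b : κ} (m : ℕ) :
    ∀ W : Finset V, Mt c b W → 2 * m + 3 ≤ W.card → Bad c b (m + 1) W := by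
  induction m with
  | zero =>
    intro W h hW
    obtain ⟨x, hx, y, hy, z, hz, hxy, hxz, hyz⟩ :=
      Finset.two_lt_card.1 (by omega : 2 < W.card)
    have key : ∀ p ∈ W, ∀ q ∈ W, ∀ r ∈ W, p ≠ q → p ≠ r → q ≠ r → c p q = b → c p r = b →
        Bad c b 1 W := by
      intro p hp q hq r hr hpq hpr hqr h1 h2
      refine Bad.up (A := {q, r}) hp ?_ ?_
      · intro t ht
        rcases Finset.mem_insert.1 ht with rfl | ht
        · exact ⟨hq, hpq.symm, h1⟩
        · rw [Finset.mem_singleton] at ht; subst ht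
          exact ⟨hr, hpr.symm, h2⟩
      · change 2 ≤ Finset.card _
        rw [Finset.card_pair hqr]
    by_cases h1 : c x y = b
    · by_cases h2 : c x z = b
      · exact key x hx y hy z hz hxy hxz hyz h1 h2
      · by_cases h3 : c y z = b
        · exact key y hy x hx z hz hxy.symm hyz hxz (by rw [hc]; exact h1) h3
        · exact absurd (h z hz x hx y hy hxz hyz (by rw [hc]; exact h2) (by rw [hc]; exact h3)) hxy
    · have h2 : c x z = b := by
        by_contra h2
        exact hyz (h x hx y hy z hz hxy.symm hxz.symm h1 h2)
      have h3 : c y z = b := by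
        by_contra h3
        exact hxz (h y hy x hx z hz hxy hyz.symm (by rw [hc]; exact h1) h3)
      exact key z hz x hx y hy hxz.symm hyz.symm hxy (by rw [hc]; exact h2) (by rw [hc]; exact h3)
  | succ m ih =>
    intro W h hW
    obtain ⟨x, hx⟩ := Finset.card_pos.1 (by omega : 0 < W.card)
    refine ⟨x, hx, ih _ ?_ ?_⟩
    · intro p hp q hq r hr
      exact h p (nb_sub hp) q (nb_sub hq) r (nb_sub hr)
    · have h1 : W ⊆ insert x (nb c b W x) ∪ W.filter (fun y => y ≠ x ∧ c x y ≠ b) := by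
        intro y hy
        simp only [Finset.mem_union, Finset.mem_insert, mem_nb, Finset.mem_filter]
        tauto
      have h2 : (W.filter (fun y => y ≠ x ∧ c x y ≠ b)).card ≤ 1 := by
        apply Finset.card_le_one.2
        intro p hp q hq
        rw [Finset.mem_filter] at hp hq
        exact h x hx p hp.1 q hq.1 hp.2.1 hq.2.1 hp.2.2 hq.2.2
      have h3 := Finset.card_le_card h1
      have h4 := Finset.card_union_le (insert x (nb c b W x))
        (W.filter (fun y => y ≠ x ∧ c x y ≠ b))
      have h5 := Finset.card_insert_le x (nb c b W x)
      omega

theorem bad_one {c : V → V → κ} {i : κ} {W : Finset V} {p q r : V} (hp : p ∈ W) (hq : q ∈ W)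
    (hr : r ∈ W) (hpq : q ≠ p) (hpr : r ≠ p) (hqr : q ≠ r) (h1 : c p q = i) (h2 : c p r = i) :
    Bad c i 1 W := by
  refine Bad.up (A := {q, r}) hp ?_ ?_
  · intro t ht
    rcases Finset.mem_insert.1 ht with rfl | ht
    · exact ⟨hq, hpq, h1⟩
    · rw [Finset.mem_singleton] at ht; subst ht
      exact ⟨hr, hpr, h2⟩
  · change 2 ≤ Finset.card _
    rw [Finset.card_pair hqr]

theorem Tw.mt {c : V → V → κ} (hc : ∀ u v, c u v = c v u) {a b : κ} {W : Finset V}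
    (h : Tw c a b W) (ha : ¬ Bad c a 1 W) : Mt c b W := by
  intro x hx y hy z hz hyx hzx h1 h2
  by_contra hyz
  by_cases h3 : c x y = a
  · by_cases h4 : c x z = a
    · exact ha (bad_one hx hy hz hyx hzx hyz h3 h4)
    · have := (h x hx z hz hzx.symm h4 h2 y hy hyx hyz).1
      exact ha (bad_one hy hx hz hyx.symm (Ne.symm hyz) hzx.symm (by rw [hc]; exact h3)
        (by rw [hc, ← this]; exact h3))
  · by_cases h4 : c x z = a
    · have := (h x hx y hy hyx.symm h3 h1 z hz hzx (Ne.symm hyz)).1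
      exact ha (bad_one hz hx hy hzx.symm hyz hyx.symm (by rw [hc]; exact h4)
        (by rw [hc, ← this]; exact h4))
    · rcases (h x hx y hy hyx.symm h3 h1 z hz hzx (Ne.symm hyz)).2 with h5 | h5
      · exact h4 h5
      · exact h2 h5

/-- transversal of twins -/
theorem Tw.transversal {c : V → V → κ} (hc : ∀ u v, c u v = c v u) {a b : κ} (n : ℕ) :
    ∀ W : Finset V, W.card = n → Tw c a b W → ∃ T ⊆ W, TC c a b T ∧ W.card ≤ 2 * T.card := by
  induction n using Nat.strong_induction_on with
  | _ n ih =>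
  intro W hW h
  rcases W.eq_empty_or_nonempty with rfl | ⟨x, hx⟩
  · exact ⟨∅, by simp, by intro x hx; simp at hx, by simp⟩
  · set N := W.filter (fun y => y ≠ x ∧ (c x y = a ∨ c x y = b)) with hN
    have hNW : N ⊆ W := Finset.filter_subset _ _
    have hxN : x ∉ N := by simp [hN]
    have hlt : N.card < n := by
      rw [← hW]
      exact Finset.card_lt_card ⟨hNW, fun hh => hxN (hh hx)⟩
    obtain ⟨T, hT, hTC, hTc⟩ := ih _ hlt N rfl (h.sub hNW)
    refine ⟨insert x T, ?_, ?_, ?_⟩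
    · intro y hy
      rcases Finset.mem_insert.1 hy with rfl | hy
      · exact hx
      · exact hNW (hT hy)
    · intro y hy z hz hyz
      rcases Finset.mem_insert.1 hy with rfl | hy1 <;> rcases Finset.mem_insert.1 hz with rfl | hz1
      · exact absurd rfl hyz
      · exact (Finset.mem_filter.1 (hT hz1)).2.2
      · rw [hc]; exact (Finset.mem_filter.1 (hT hy1)).2.2
      · exact hTC y hy1 z hz1 hyz
    · rw [Finset.card_insert_of_notMem (fun hh => hxN (hT hh))]
      have h1 : W ⊆ insert x N ∪ W.filter (fun y => y ≠ x ∧ ¬ (c x y = a ∨ c x y = b)) := by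
        intro y hy
        simp only [Finset.mem_union, Finset.mem_insert, hN, Finset.mem_filter]
        tauto
      have h2 : (W.filter (fun y => y ≠ x ∧ ¬ (c x y = a ∨ c x y = b))).card ≤ 1 := by
        apply Finset.card_le_one.2
        intro p hp q hq
        rw [Finset.mem_filter] at hp hq
        by_contra hpq
        obtain ⟨hp1, hp2, hp3⟩ := hp
        push Not at hp3
        exact hq.2.2 (h x hx p hp1 hp2.symm hp3.1 hp3.2 q hq.1 hq.2.1 (Ne.symm hpq)).2
      have h3 := Finset.card_le_card h1
      have h4 := Finset.card_union_le (insert x N)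
        (W.filter (fun y => y ≠ x ∧ ¬ (c x y = a ∨ c x y = b)))
      have h5 := Finset.card_insert_le x N
      omega

/-- a clique of size `n+2` is bad -/
theorem clique_bad {c : V → V → κ} {i : κ} (n : ℕ) : ∀ {W S : Finset V}, S ⊆ W →
    S.card = n + 2 → (∀ x ∈ S, ∀ y ∈ S, x ≠ y → c x y = i) → Bad c i n W := by
  induction n with
  | zero => intro W S h1 h2 _; change 2 ≤ _; have := Finset.card_le_card h1; omega
  | succ n ih =>
    intro W S h1 h2 h3
    obtain ⟨x, hx⟩ := Finset.card_pos.1 (by omega : 0 < S.card)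
    refine ⟨x, h1 hx, ih (S := S.erase x) ?_ ?_ ?_⟩
    · intro y hy
      obtain ⟨hyx, hyS⟩ := Finset.mem_erase.1 hy
      exact mem_nb.2 ⟨h1 hyS, hyx, h3 x hx y hyS hyx.symm⟩
    · rw [Finset.card_erase_of_mem hx]; omega
    · intro y hy z hz
      exact h3 y (Finset.mem_of_mem_erase hy) z (Finset.mem_of_mem_erase hz)

/-- a clique of size `n+1` containing a vertex with a twin is bad -/
theorem clique_twin_bad {c : V → V → κ} {i : κ} {z z' : V}
    (hzz : z ≠ z') (n : ℕ) :
    ∀ {W S : Finset V}, S ⊆ W → z ∈ S → z' ∈ W → z' ∉ S → S.card = n + 1 →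
    (∀ x ∈ S, ∀ y ∈ S, x ≠ y → c x y = i) → (∀ x ∈ S, x ≠ z → c x z' = i) → Bad c i n W := by
  induction n with
  | zero =>
    intro W S h1 hz hz' _ _ _ _
    exact Finset.one_lt_card.2 ⟨z, h1 hz, z', hz', hzz⟩
  | succ n ih =>
    intro W S h1 hz hz' hz'S h2 h3 h4
    obtain ⟨x, hx⟩ := Finset.card_pos.1
      (by rw [Finset.card_erase_of_mem hz]; omega : 0 < (S.erase z).card)
    obtain ⟨hxz, hxS⟩ := Finset.mem_erase.1 hx
    refine ⟨x, h1 hxS, ih (S := S.erase x) ?_ ?_ ?_ ?_ ?_ ?_ ?_⟩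
    · intro y hy
      obtain ⟨hyx, hyS⟩ := Finset.mem_erase.1 hy
      exact mem_nb.2 ⟨h1 hyS, hyx, h3 x hxS y hyS hyx.symm⟩
    · exact Finset.mem_erase.2 ⟨hxz.symm, hz⟩
    · exact mem_nb.2 ⟨hz', by rintro rfl; exact hz'S hxS, h4 x hxS hxz⟩
    · exact fun h => hz'S (Finset.mem_of_mem_erase h)
    · rw [Finset.card_erase_of_mem hxS]; omega
    · intro y hy t ht
      exact h3 y (Finset.mem_of_mem_erase hy) t (Finset.mem_of_mem_erase ht)
    · intro y hy
      exact h4 y (Finset.mem_of_mem_erase hy)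

/-- a monochromatic clique containing a non-single vertex -/
theorem Tw.clique_bad {c : V → V → κ} (hc : ∀ u v, c u v = c v u) {a b : κ} {W S : Finset V}
    (h : Tw c a b W) (hS : S ⊆ W) {i : κ} (hi : i = a ∨ i = b) {n : ℕ} (hcard : S.card = n + 1)
    (hcl : ∀ x ∈ S, ∀ y ∈ S, x ≠ y → c x y = i) (hex : ∃ z ∈ S, ¬ Sg c a b W z) :
    Bad c i n W := by
  obtain ⟨z, hz, hns⟩ := hex
  unfold Sg at hns
  push Not at hns
  obtain ⟨z', hz', hzz, h1, h2⟩ := hns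
  have hz'S : z' ∉ S := by
    intro hh
    have := hcl z hz z' hh hzz.symm
    rcases hi with rfl | rfl
    · exact h1 this
    · exact h2 this
  refine clique_twin_bad hzz.symm n hS hz hz' hz'S hcard hcl ?_
  intro x hx hxz
  have := (h z (hS hz) z' hz' hzz.symm h1 h2 x (hS hx) hxz (by rintro rfl; exact hz'S hx)).1
  rw [hc, ← this]
  exact hcl z hz x hx hxz.symm

theorem not_bad_nb {c : V → V → κ} {i : κ} {n : ℕ} {W : Finset V} {x : V} (hx : x ∈ W)
    (h : ¬ Bad c i (n + 1) W) : ¬ Bad c i n (nb c i W x) := fun hb => h ⟨x, hx, hb⟩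

theorem T22_single {c : V → V → κ} (hc : ∀ u v, c u v = c v u) {a b : κ} {W : Finset V}
    (h : Tw c a b W) (ha : ¬ Bad c a 2 W) (hb : ¬ Bad c b 2 W) {x : V} (hx : x ∈ W)
    (hs : Sg c a b W x) : W.card ≤ 9 := by
  have h1 := card_le_nb hs
  have h2 : (nb c a W x).card ≤ 4 := by
    by_contra h4
    have := ((h.sub nb_sub).mt hc (not_bad_nb hx ha)).bad hc 1 _ (by omega)
    exact hb (this.mono nb_sub)
  have h3 : (nb c b W x).card ≤ 4 := by
    by_contra h4
    have := ((h.symm.sub nb_sub).mt hc (not_bad_nb hx hb)).bad hc 1 _ (by omega)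
    exact ha (this.mono nb_sub)
  omega

theorem T22 {c : V → V → κ} (hc : ∀ u v, c u v = c v u) {a b : κ} {W : Finset V}
    (h : Tw c a b W) (ha : ¬ Bad c a 2 W) (hb : ¬ Bad c b 2 W) : W.card ≤ 10 := by
  by_contra hW
  have hns : ∀ x ∈ W, ¬ Sg c a b W x := by
    intro x hx hs
    have := T22_single hc h ha hb hx hs
    omega
  obtain ⟨T, hT, hTC, hTc⟩ := Tw.transversal hc _ W rfl h
  rcases ramsey33 hc hTC (by omega) with ⟨S, hS, hSc, hcl⟩ | ⟨S, hS, hSc, hcl⟩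
  all_goals
    obtain ⟨z, hz⟩ := Finset.card_pos.1 (by omega : 0 < S.card)
  · exact ha (h.clique_bad hc (hS.trans hT) (Or.inl rfl) hSc hcl ⟨z, hz, hns z (hT (hS hz))⟩)
  · exact hb (h.clique_bad hc (hS.trans hT) (Or.inr rfl) hSc hcl ⟨z, hz, hns z (hT (hS hz))⟩)

theorem T23 {c : V → V → κ} (hc : ∀ u v, c u v = c v u) {a b : κ} {W : Finset V}
    (h : Tw c a b W) (ha : ¬ Bad c a 2 W) (hb : ¬ Bad c b 3 W) : W.card ≤ 16 := by
  by_contra hW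
  set S := W.filter (fun x => Sg c a b W x) with hS
  set D := W.filter (fun x => ¬ Sg c a b W x) with hD
  have hSD : S.card + D.card = W.card := Finset.card_filter_add_card_filter_not _
  have hSW : S ⊆ W := Finset.filter_subset _ _
  have hDW : D ⊆ W := Finset.filter_subset _ _
  have hcl : ∀ x ∈ S, ∀ y ∈ S, x ≠ y → c x y = a := by
    intro x hx y hy hxy
    obtain ⟨hxW, hxs⟩ := Finset.mem_filter.1 hx
    obtain ⟨hyW, hys⟩ := Finset.mem_filter.1 hy
    refine (hxs y hyW hxy.symm).resolve_right (fun hcol => ?_)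
    have h1 := card_le_nb hxs
    have h2 : (nb c a W x).card ≤ 6 := by
      by_contra h4
      have := ((h.sub nb_sub).mt hc (not_bad_nb hxW ha)).bad hc 2 _ (by omega)
      exact hb (this.mono nb_sub)
    have h3 := T22_single hc (h.sub (nb_sub (i := b) (x := x)))
      (fun hh => ha (hh.mono nb_sub)) (not_bad_nb hxW hb)
      (mem_nb.2 ⟨hyW, hxy.symm, hcol⟩) (hys.sub nb_sub)
    omega
  have hS3 : S.card ≤ 3 := by
    by_contra h4
    obtain ⟨S', h1, h2⟩ := Finset.exists_subset_card_eq (by omega : 4 ≤ S.card)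
    exact ha (GRaux.clique_bad 2 (h1.trans hSW) h2
      (fun x hx y hy => hcl x (h1 hx) y (h1 hy)))
  obtain ⟨T, hT, hTC, hTc⟩ := Tw.transversal hc _ D rfl (h.sub hDW)
  obtain ⟨S', hS', hSc'⟩ := Finset.exists_subset_card_eq (min_le_left S.card 2)
  have hdis : Disjoint S' T := by
    rw [Finset.disjoint_left]
    intro x hx hx'
    exact (Finset.mem_filter.1 (hT hx')).2 (Finset.mem_filter.1 (hS' hx)).2
  have hcard : 9 ≤ (S' ∪ T).card := by
    rw [Finset.card_union_of_disjoint hdis]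
    omega
  have hTC' : TC c a b (S' ∪ T) := by
    intro x hx y hy hxy
    rcases Finset.mem_union.1 hx with hx | hx
    · have hyW : y ∈ W := by
        rcases Finset.mem_union.1 hy with hy | hy
        · exact hSW (hS' hy)
        · exact hDW (hT hy)
      exact (Finset.mem_filter.1 (hS' hx)).2 y hyW hxy.symm
    · rcases Finset.mem_union.1 hy with hy | hy
      · rw [hc]
        exact (Finset.mem_filter.1 (hS' hy)).2 x (hDW (hT hx)) hxy
      · exact hTC x hx y hy hxy
  have hsub : S' ∪ T ⊆ W := Finset.union_subset (hS'.trans hSW) (hT.trans hDW)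
  have hbig : ∀ Q ⊆ S' ∪ T, 3 ≤ Q.card → ∃ z ∈ Q, ¬ Sg c a b W z := by
    intro Q hQ hQc
    by_contra hno
    push Not at hno
    have : Q ⊆ S' := by
      intro z hz
      rcases Finset.mem_union.1 (hQ hz) with h | h
      · exact h
      · exact absurd (hno z hz) (Finset.mem_filter.1 (hT h)).2
    have := Finset.card_le_card this
    omega
  rcases ramsey34 hc hTC' hcard with ⟨Q, hQ, hQc, hcl⟩ | ⟨Q, hQ, hQc, hcl⟩
  · exact ha (h.clique_bad hc (hQ.trans hsub) (Or.inl rfl) hQc hcl (hbig Q hQ (by omega)))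
  · exact hb (h.clique_bad hc (hQ.trans hsub) (Or.inr rfl) hQc hcl (hbig Q hQ (by omega)))

theorem T33 {c : V → V → κ} (hc : ∀ u v, c u v = c v u) {a b : κ} {W : Finset V}
    (h : Tw c a b W) (ha : ¬ Bad c a 3 W) (hb : ¬ Bad c b 3 W) : W.card ≤ 34 := by
  by_contra hW
  have hns : ∀ x ∈ W, ¬ Sg c a b W x := by
    intro x hx hs
    have h1 := card_le_nb hs
    have h2 := T23 hc (h.sub (nb_sub (i := a) (x := x))) (not_bad_nb hx ha)
      (fun hh => hb (hh.mono nb_sub))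
    have h3 := T23 hc (h.symm.sub (nb_sub (i := b) (x := x))) (not_bad_nb hx hb)
      (fun hh => ha (hh.mono nb_sub))
    omega
  obtain ⟨T, hT, hTC, hTc⟩ := Tw.transversal hc _ W rfl h
  rcases ramsey44 hc hTC (by omega) with ⟨S, hS, hSc, hcl⟩ | ⟨S, hS, hSc, hcl⟩
  all_goals
    obtain ⟨z, hz⟩ := Finset.card_pos.1 (by omega : 0 < S.card)
  · exact ha (h.clique_bad hc (hS.trans hT) (Or.inl rfl) hSc hcl ⟨z, hz, hns z (hT (hS hz))⟩)
  · exact hb (h.clique_bad hc (hS.trans hT) (Or.inr rfl) hSc hcl ⟨z, hz, hns z (hT (hS hz))⟩)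

end Ramsey

section Main

open scoped Classical

variable {V κ : Type*}

/-- weights of levels -/
noncomputable def g (n : ℕ) : ℝ := if n = 3 then √17 else if n = 2 then √5 else 1

theorem g_one : g 1 = 1 := by simp [g]
theorem g_two : g 2 = √5 := by simp [g]
theorem g_three : g 3 = √17 := by simp [g]

theorem s5_lo : (2.236 : ℝ) ≤ √5 := Real.le_sqrt_of_sq_le (by norm_num)
theorem s5_hi : √5 ≤ (2.237 : ℝ) := (Real.sqrt_le_left (by norm_num)).2 (by norm_num)
theorem s17_lo : (4.123 : ℝ) ≤ √17 := Real.le_sqrt_of_sq_le (by norm_num)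
theorem s17_hi : √17 ≤ (4.124 : ℝ) := (Real.sqrt_le_left (by norm_num)).2 (by norm_num)
theorem s5_sq : √5 * √5 = (5 : ℝ) := Real.mul_self_sqrt (by norm_num)
theorem s17_sq : √17 * √17 = (17 : ℝ) := Real.mul_self_sqrt (by norm_num)
theorem s85_lo : (9.21 : ℝ) ≤ √5 * √17 := by
  nlinarith [s5_lo, s17_lo]
theorem s85_hi : √5 * √17 ≤ (9.23 : ℝ) := by
  nlinarith [s5_hi, s17_hi, Real.sqrt_nonneg 5, Real.sqrt_nonneg 17]

theorem one_le_g (n : ℕ) : 1 ≤ g n := by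
  unfold g
  split_ifs
  · linarith [s17_lo]
  · linarith [s5_lo]
  · exact le_refl _

theorem edge_case {c : V → V → κ} (hc : ∀ u v, c u v = c v u) {a b : κ} {U X A B : Finset V}
    {M : ℝ} (hM : 1 ≤ M) {m n : ℕ} (hm : m = 2 ∨ m = 3) (hn : n = 2 ∨ n = 3)
    (ha : ¬ Bad c a m U) (hb : ¬ Bad c b n U)
    (hXU : X ⊆ U) (hAU : A ⊆ U) (hBU : B ⊆ U) (hA : A.Nonempty) (hB : B.Nonempty)
    (hcard : U.card ≤ X.card + A.card + B.card)
    (hXA : ∀ x ∈ X, ∀ y ∈ A, y ≠ x ∧ c x y = a)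
    (hXB : ∀ x ∈ X, ∀ y ∈ B, y ≠ x ∧ c x y = b)
    (hAX : ∀ Y, (Y = X ∨ Y = A ∨ Y = B) → ∀ x y, 1 ≤ x → x ≤ 3 → 1 ≤ y → y ≤ 3 →
      ¬ Bad c a x Y → ¬ Bad c b y Y → (Y.card : ℝ) ≤ 2 * M * (g x * g y))
    (hedge : ∃ u ∈ X, ∃ v ∈ X, v ≠ u ∧ c u v = a) :
    (U.card : ℝ) ≤ 2 * M * (g m * g n) := by
  have hX' := hAX X (by simp)
  have hA' := hAX A (by simp)
  have hB' := hAX B (by simp)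
  obtain ⟨u, hu, v, hv, huv, hcol⟩ := hedge
  obtain ⟨y, hy⟩ := hA
  obtain ⟨z, hz⟩ := hB
  have hcard' : (U.card : ℝ) ≤ X.card + A.card + B.card := by exact_mod_cast hcard
  -- levels
  have X1 : ∀ k, ¬ Bad c a (k + 1) U → ¬ Bad c a k X := fun k h hh =>
    h (hh.up (hAU hy) (fun t ht => ⟨hXU ht, (hXA t ht y hy).1.symm, by
      rw [hc]; exact (hXA t ht y hy).2⟩))
  have X2 : ∀ k, ¬ Bad c b (k + 1) U → ¬ Bad c b k X := fun k h hh =>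
    h (hh.up (hBU hz) (fun t ht => ⟨hXU ht, (hXB t ht z hz).1.symm, by
      rw [hc]; exact (hXB t ht z hz).2⟩))
  have A1 : ∀ k, ¬ Bad c a (k + 2) U → ¬ Bad c a k A := fun k h hh =>
    h (hh.up2 (hXU hu) (hXU hv) huv hcol (fun t ht => ⟨hAU ht, (hXA u hu t ht).1,
      (hXA v hv t ht).1, (hXA u hu t ht).2, (hXA v hv t ht).2⟩))
  have A2 : ∀ k, ¬ Bad c b k U → ¬ Bad c b k A := fun k h hh => h (hh.mono hAU)
  have B1 : ∀ k, ¬ Bad c a k U → ¬ Bad c a k B := fun k h hh => h (hh.mono hBU)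
  have B2 : ∀ k, ¬ Bad c b (k + 1) U → ¬ Bad c b k B := fun k h hh =>
    h (hh.up (hXU hu) (fun t ht => ⟨hBU ht, (hXB u hu t ht).1, (hXB u hu t ht).2⟩))
  have e5 := s5_lo
  have e5' := s5_hi
  have e17 := s17_lo
  have e17' := s17_hi
  have e55 := s5_sq
  have e1717 := s17_sq
  have e85 := s85_lo
  have e85' := s85_hi
  have fin : ∀ p q : ℝ, (U.card : ℝ) ≤ 2 * M * p → p ≤ q → (U.card : ℝ) ≤ 2 * M * q := by
    intro p q h1 h2
    exact h1.trans (mul_le_mul_of_nonneg_left h2 (by linarith))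
  rcases hm with rfl | rfl
  · -- level 2 in color a
    have hA1 : (A.card : ℝ) ≤ 2 * M * (1 / 2) := by
      have h0 := A1 0 ha
      have : A.card ≤ 1 := by
        by_contra h; exact h0 (show 2 ≤ A.card by omega)
      have : (A.card : ℝ) ≤ 1 := by exact_mod_cast this
      linarith
    rcases hn with rfl | rfl
    · have hx := hX' 1 1 (by norm_num) (by norm_num) (by norm_num) (by norm_num) (X1 1 ha) (X2 1 hb)
      have hb' := hB' 2 1 (by norm_num) (by norm_num) (by norm_num) (by norm_num) (B1 2 ha) (B2 1 hb)
      rw [g_one] at hx hb'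
      rw [g_two] at hb' ⊢
      refine fin (1 * 1 + 1 / 2 + √5 * 1) _ (by linarith) (by linarith)
    · have hx := hX' 1 2 (by norm_num) (by norm_num) (by norm_num) (by norm_num) (X1 1 ha) (X2 2 hb)
      have hb' := hB' 2 2 (by norm_num) (by norm_num) (by norm_num) (by norm_num) (B1 2 ha) (B2 2 hb)
      simp only [g_one, g_two, g_three] at hx hb' ⊢
      refine fin (1 * √5 + 1 / 2 + √5 * √5) _ (by linarith) (by linarith)
  · rcases hn with rfl | rfl
    · have hx := hX' 2 1 (by norm_num) (by norm_num) (by norm_num) (by norm_num) (X1 2 ha) (X2 1 hb)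
      have ha' := hA' 1 2 (by norm_num) (by norm_num) (by norm_num) (by norm_num) (A1 1 ha) (A2 2 hb)
      have hb' := hB' 3 1 (by norm_num) (by norm_num) (by norm_num) (by norm_num) (B1 3 ha) (B2 1 hb)
      simp only [g_one, g_two, g_three] at hx ha' hb' ⊢
      refine fin (√5 * 1 + 1 * √5 + √17 * 1) _ (by linarith) (by linarith)
    · have ha' := hA' 1 3 (by norm_num) (by norm_num) (by norm_num) (by norm_num) (A1 1 ha) (A2 3 hb)
      by_cases hbe : ∃ p ∈ X, ∃ q ∈ X, p ≠ q ∧ c p q = b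
      · obtain ⟨p, hp, q, hq, hpq, hcol'⟩ := hbe
        have B3 : ¬ Bad c b 1 B := fun hh =>
          hb (hh.up2 (hXU hp) (hXU hq) hpq.symm hcol' (fun t ht => ⟨hBU ht, (hXB p hp t ht).1,
            (hXB q hq t ht).1, (hXB p hp t ht).2, (hXB q hq t ht).2⟩))
        have hx := hX' 2 2 (by norm_num) (by norm_num) (by norm_num) (by norm_num)
          (X1 2 ha) (X2 2 hb)
        have hb' := hB' 3 1 (by norm_num) (by norm_num) (by norm_num) (by norm_num) (B1 3 ha) B3
        simp only [g_one, g_two, g_three] at hx ha' hb' ⊢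
        refine fin (√5 * √5 + 1 * √17 + √17 * 1) _ (by linarith) (by linarith)
      · push Not at hbe
        have hx := hX' 2 1 (by norm_num) (by norm_num) (by norm_num) (by norm_num)
          (X1 2 ha) (not_bad_one_of_no_edge hbe)
        have hb' := hB' 3 2 (by norm_num) (by norm_num) (by norm_num) (by norm_num)
          (B1 3 ha) (B2 2 hb)
        simp only [g_one, g_two, g_three] at hx ha' hb' ⊢
        refine fin (√5 * 1 + 1 * √17 + √17 * √5) _ (by linarith) (by linarith)

/-- The case where no part contains edges of the two colors. -/
theorem clean_case {c : V → V → κ} (hc : ∀ u v, c u v = c v u) {a b : κ} {U : Finset V}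
    {φ : V → V} {M : ℝ} (hM : 1 ≤ M) {m n : ℕ} (hm : m = 2 ∨ m = 3) (hn : n = 2 ∨ n = 3)
    (ha : ¬ Bad c a m U) (hb : ¬ Bad c b n U)
    (hφ : ∀ x ∈ U, ∀ y ∈ U, φ x ≠ φ y → c x y = c (φ x) (φ y) ∧ (c x y = a ∨ c x y = b))
    (hin : ∀ x ∈ U, ∀ y ∈ U, x ≠ y → φ x = φ y → c x y ≠ a ∧ c x y ≠ b)
    (hpart : ∀ r, ((U.filter (fun y => φ y = r)).card : ℝ) ≤ 2 * M) :
    (U.card : ℝ) ≤ 2 * M * (g m * g n) := by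
  have hch : ∀ r, ∃ P ⊆ U.filter (fun y => φ y = r),
      P.card = min (U.filter (fun y => φ y = r)).card 2 := fun r =>
    Finset.exists_subset_card_eq (min_le_left _ 2)
  choose P hP hPc using hch
  set W := (U.image φ).biUnion P with hW
  have hWU : W ⊆ U := by
    intro x hx
    obtain ⟨r, _, hr⟩ := Finset.mem_biUnion.1 hx
    exact (Finset.mem_filter.1 (hP r hr)).1
  have hWP : ∀ x ∈ W, x ∈ P (φ x) := by
    intro x hx
    obtain ⟨r, _, hr⟩ := Finset.mem_biUnion.1 hx
    have := (Finset.mem_filter.1 (hP r hr)).2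
    rw [this]; exact hr
  have hWc : W.card = ∑ r ∈ U.image φ, (P r).card := by
    apply Finset.card_biUnion
    intro r _ r' _ hrr
    change Disjoint (P r) (P r')
    rw [Finset.disjoint_left]
    intro x hx hx'
    exact hrr ((Finset.mem_filter.1 (hP r hx)).2.symm.trans (Finset.mem_filter.1 (hP r' hx')).2)
  have hUc : U.card = ∑ r ∈ U.image φ, (U.filter (fun y => φ y = r)).card :=
    Finset.card_eq_sum_card_image φ U
  have hUW : (U.card : ℝ) ≤ M * W.card := by
    rw [hUc, hWc, Nat.cast_sum, Nat.cast_sum, Finset.mul_sum]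
    apply Finset.sum_le_sum
    intro r _
    rw [hPc r]
    rcases le_total (U.filter (fun y => φ y = r)).card 2 with h | h
    · rw [min_eq_left h]
      have : (0 : ℝ) ≤ ((U.filter (fun y => φ y = r)).card : ℝ) := Nat.cast_nonneg _
      nlinarith
    · rw [min_eq_right h]
      have := hpart r
      push_cast
      linarith
  have hTw : Tw c a b W := by
    intro x hx y hy hxy h1 h2 z hz hzx hzy
    have hxy' : φ x = φ y := by
      by_contra h
      rcases (hφ x (hWU hx) y (hWU hy) h).2 with h | h
      · exact h1 h
      · exact h2 h
    have hxz : φ x ≠ φ z := by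
      intro h
      have hx1 := hWP x hx
      have hy1 := hWP y hy
      have hz1 := hWP z hz
      rw [← hxy'] at hy1
      rw [← h] at hz1
      have : 2 < (P (φ x)).card :=
        Finset.two_lt_card.2 ⟨x, hx1, y, hy1, z, hz1, hxy, hzx.symm, hzy.symm⟩
      rw [hPc] at this
      omega
    have e1 := hφ x (hWU hx) z (hWU hz) hxz
    have e2 := hφ y (hWU hy) z (hWU hz) (hxy' ▸ hxz)
    refine ⟨?_, e1.2⟩
    rw [e1.1, e2.1, hxy']
  have ha' : ¬ Bad c a m W := fun h => ha (h.mono hWU)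
  have hb' : ¬ Bad c b n W := fun h => hb (h.mono hWU)
  have fin : ∀ (k : ℕ) (q : ℝ), W.card ≤ k → (k : ℝ) ≤ 2 * q → (U.card : ℝ) ≤ 2 * M * q := by
    intro k q h1 h2
    have h3 : (W.card : ℝ) ≤ 2 * q := le_trans (by exact_mod_cast h1) h2
    calc (U.card : ℝ) ≤ M * W.card := hUW
      _ ≤ M * (2 * q) := mul_le_mul_of_nonneg_left h3 (by linarith)
      _ = 2 * M * q := by ring
  have e85 := s85_lo
  rcases hm with rfl | rfl <;> rcases hn with rfl | rfl <;> simp only [g_two, g_three]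
  · refine fin 10 _ (T22 hc hTw ha' hb') ?_
    rw [s5_sq]; norm_num
  · refine fin 16 _ (T23 hc hTw ha' hb') ?_
    push_cast; linarith
  · refine fin 16 _ (T23 hc hTw.symm hb' ha') ?_
    push_cast; linarith
  · refine fin 34 _ (T33 hc hTw ha' hb') ?_
    rw [s17_sq]; norm_num

theorem split_case {c : V → V → κ} (hc : ∀ u v, c u v = c v u) {a : κ} {U A B : Finset V}
    {M : ℝ} (hM : 1 ≤ M) {m : ℕ} (hm1 : 1 ≤ m) (hm3 : m ≤ 3) (ha : ¬ Bad c a m U)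
    (hAU : A ⊆ U) (hBU : B ⊆ U) (hA : A.Nonempty) (hB : B.Nonempty)
    (hcard : U.card ≤ A.card + B.card)
    (hAB : ∀ x ∈ A, ∀ y ∈ B, y ≠ x ∧ c x y = a)
    (hIH : ∀ Y, (Y = A ∨ Y = B) → ∀ x, 1 ≤ x → x ≤ 3 → ¬ Bad c a x Y →
      (Y.card : ℝ) ≤ 2 * M * g x) :
    (U.card : ℝ) ≤ 2 * M * g m := by
  have hA' := hIH A (by simp)
  have hB' := hIH B (by simp)
  obtain ⟨p, hp⟩ := hA
  obtain ⟨q, hq⟩ := hB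
  have hcard' : (U.card : ℝ) ≤ A.card + B.card := by exact_mod_cast hcard
  have A1 : ∀ k, ¬ Bad c a (k + 1) U → ¬ Bad c a k A := fun k h hh =>
    h (hh.up (hBU hq) (fun t ht => ⟨hAU ht, (hAB t ht q hq).1.symm, by
      rw [hc]; exact (hAB t ht q hq).2⟩))
  have B1 : ∀ k, ¬ Bad c a (k + 1) U → ¬ Bad c a k B := fun k h hh =>
    h (hh.up (hAU hp) (fun t ht => ⟨hBU ht, (hAB p hp t ht).1, (hAB p hp t ht).2⟩))
  have e5 := s5_lo
  have e5' := s5_hi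
  have e17 := s17_lo
  have fin : ∀ p q : ℝ, (U.card : ℝ) ≤ 2 * M * p → p ≤ q → (U.card : ℝ) ≤ 2 * M * q := by
    intro p q h1 h2
    exact h1.trans (mul_le_mul_of_nonneg_left h2 (by linarith))
  obtain rfl | rfl | rfl : m = 1 ∨ m = 2 ∨ m = 3 := by omega
  · have h1 : ¬ 2 ≤ A.card := A1 0 ha
    have h2 : ¬ 2 ≤ B.card := B1 0 ha
    have : U.card ≤ 2 := by omega
    have : (U.card : ℝ) ≤ 2 := by exact_mod_cast this
    rw [g_one]; linarith
  · have h1 := hA' 1 (by norm_num) (by norm_num) (A1 1 ha)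
    have h2 := hB' 1 (by norm_num) (by norm_num) (B1 1 ha)
    rw [g_one] at h1 h2
    rw [g_two]
    exact fin 2 _ (by linarith) (by linarith)
  · rw [g_three]
    by_cases hbe : ∃ u ∈ B, ∃ v ∈ B, u ≠ v ∧ c u v = a
    · obtain ⟨u, hu, v, hv, huv, hcol⟩ := hbe
      have hA3 : ¬ Bad c a 1 A := fun hh =>
        ha (hh.up2 (hBU hu) (hBU hv) huv.symm hcol (fun t ht => ⟨hAU ht, (hAB t ht u hu).1.symm,
          (hAB t ht v hv).1.symm, by rw [hc]; exact (hAB t ht u hu).2,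
          by rw [hc]; exact (hAB t ht v hv).2⟩))
      have h1 := hA' 1 (by norm_num) (by norm_num) hA3
      have h2 := hB' 2 (by norm_num) (by norm_num) (B1 2 ha)
      rw [g_one] at h1
      rw [g_two] at h2
      exact fin (1 + √5) _ (by linarith) (by linarith)
    · push Not at hbe
      have h1 := hA' 2 (by norm_num) (by norm_num) (A1 2 ha)
      have h2 := hB' 1 (by norm_num) (by norm_num) (not_bad_one_of_no_edge hbe)
      rw [g_one] at h2
      rw [g_two] at h1
      exact fin (1 + √5) _ (by linarith) (by linarith)

theorem prod_ge_one {ι : Type*} (s : Finset ι) (t : ι → ℕ) : 1 ≤ ∏ i ∈ s, g (t i) := by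
  induction s using Finset.induction_on with
  | empty => simp
  | insert i s hi ih =>
    rw [Finset.prod_insert hi]
    nlinarith [one_le_g (t i)]

theorem prod_one [Fintype κ] (t : κ → ℕ) (a : κ) (x : ℕ) :
    ∏ i, g (Function.update t a x i) = (∏ i ∈ Finset.univ.erase a, g (t i)) * g x := by
  rw [← Finset.prod_erase_mul _ _ (Finset.mem_univ a)]
  congr 1
  · apply Finset.prod_congr rfl
    intro i hi
    rw [Function.update_of_ne (Finset.ne_of_mem_erase hi)]
  · rw [Function.update_self]

theorem prod_two [Fintype κ] (t : κ → ℕ) {a b : κ} (hab : a ≠ b) (x y : ℕ) :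
    ∏ i, g (Function.update (Function.update t a x) b y i)
      = (∏ i ∈ (Finset.univ.erase b).erase a, g (t i)) * (g x * g y) := by
  rw [prod_one, ← Finset.prod_erase_mul (Finset.univ.erase b) _
    (Finset.mem_erase.2 ⟨hab, Finset.mem_univ a⟩), Function.update_self, mul_assoc]
  congr 1
  apply Finset.prod_congr rfl
  intro i hi
  rw [Function.update_of_ne (Finset.ne_of_mem_erase hi)]

theorem upper [Fintype κ] {c : V → V → κ} (hc : Gal c) : ∀ (N : ℕ) (U : Finset V), U.card = N →
    ∀ t : κ → ℕ, (∀ i, 1 ≤ t i ∧ t i ≤ 3) → (∀ i, ¬ Bad c i (t i) U) →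
    (U.card : ℝ) ≤ 2 * ∏ i, g (t i) := by
  intro N
  induction N using Nat.strong_induction_on with
  | _ N ih =>
  intro U hU t ht hfree
  by_cases hN : N < 2
  · have h1 := prod_ge_one Finset.univ t
    have : (U.card : ℝ) ≤ 1 := by
      have : U.card ≤ 1 := by omega
      exact_mod_cast this
    linarith
  have IH : ∀ X ⊆ U, X.card < U.card → ∀ t : κ → ℕ, (∀ i, 1 ≤ t i ∧ t i ≤ 3) →
      (∀ i, ¬ Bad c i (t i) X) → (X.card : ℝ) ≤ 2 * ∏ i, g (t i) := by
    intro X _ hlt t ht hf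
    exact ih X.card (by omega) X rfl t ht hf
  -- split case
  by_cases hsplit : ∃ a : κ, ∃ A ⊆ U, A.Nonempty ∧ (U \ A).Nonempty ∧
      ∀ x ∈ A, ∀ y ∈ U \ A, c x y = a
  · obtain ⟨a, A, hAU, hA, hB, hAB⟩ := hsplit
    have hcardAB : U.card = A.card + (U \ A).card := by
      rw [Finset.card_sdiff_of_subset hAU]
      have := Finset.card_le_card hAU
      omega
    have hA0 := Finset.card_pos.2 hA
    have hB0 := Finset.card_pos.2 hB
    have hlast : ∏ i, g (t i) = (∏ i ∈ Finset.univ.erase a, g (t i)) * g (t a) := by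
      have := prod_one t a (t a)
      rwa [Function.update_eq_self] at this
    rw [hlast, ← mul_assoc]
    refine split_case hc.1 (prod_ge_one _ t) (ht a).1 (ht a).2 (hfree a) hAU
      Finset.sdiff_subset hA hB hcardAB.le ?_ ?_
    · intro x hx y hy
      exact ⟨fun h => (Finset.mem_sdiff.1 hy).2 (h ▸ hx), hAB x hx y hy⟩
    · intro Y hY x hx1 hx3 hbad
      have hYU : Y ⊆ U := by
        rcases hY with rfl | rfl
        · exact hAU
        · exact Finset.sdiff_subset
      have hYc : Y.card < U.card := by
        rcases hY with rfl | rfl <;> omega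
      have := IH Y hYU hYc (Function.update t a x) ?_ ?_
      · rw [prod_one, ← mul_assoc] at this
        exact this
      · intro i
        by_cases hi : i = a
        · subst hi; rw [Function.update_self]; exact ⟨hx1, hx3⟩
        · rw [Function.update_of_ne hi]; exact ht i
      · intro i
        by_cases hi : i = a
        · subst hi; rw [Function.update_self]; exact hbad
        · rw [Function.update_of_ne hi]; exact fun h => hfree i (h.mono hYU)
  -- Gallai partition
  obtain ⟨φ, hφU, ⟨p, hp, q, hq, hpq⟩, a, b, hφ⟩ := gallai hc _ U rfl (by omega)
  let Pt : V → Finset V := fun x => U.filter (fun y => φ y = φ x)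
  let Nn : V → κ → Finset V := fun x i => U.filter (fun y => φ y ≠ φ x ∧ c x y = i)
  have hPU : ∀ x, Pt x ⊆ U := fun x => Finset.filter_subset _ _
  have hNU : ∀ x i, Nn x i ⊆ U := fun x i => Finset.filter_subset _ _
  have hrest : ∀ x ∈ U, (U \ Pt x).Nonempty := by
    intro x hx
    by_cases h : φ p = φ x
    · exact ⟨q, by simp only [Pt, Finset.mem_sdiff, Finset.mem_filter, not_and]
                   exact ⟨hq, fun _ h' => hpq (h.trans h'.symm)⟩⟩
    · exact ⟨p, by simp only [Pt, Finset.mem_sdiff, Finset.mem_filter, not_and]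
                   exact ⟨hp, fun _ => h⟩⟩
  have hhom : ∀ x ∈ U, ∀ i, ∀ y ∈ Pt x, ∀ z ∈ Nn x i, z ≠ y ∧ c y z = i := by
    intro x hx i y hy z hz
    obtain ⟨hyU, hyx⟩ := Finset.mem_filter.1 hy
    obtain ⟨hzU, hzx, hzi⟩ := Finset.mem_filter.1 hz
    refine ⟨by rintro rfl; exact hzx hyx, ?_⟩
    have h1 := (hφ y hyU z hzU (by rw [hyx]; exact Ne.symm hzx)).1
    have h2 := (hφ x hx z hzU (Ne.symm hzx)).1
    rw [h1, hyx, ← h2, hzi]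
  have hne : ∀ x ∈ U, ∀ i j, (∀ y ∈ U, φ y ≠ φ x → c x y = i ∨ c x y = j) →
      (Nn x i).Nonempty := by
    intro x hx i j hij
    by_contra hemp
    rw [Finset.not_nonempty_iff_eq_empty] at hemp
    refine hsplit ⟨j, Pt x, hPU x, ⟨x, Finset.mem_filter.2 ⟨hx, rfl⟩⟩, hrest x hx, ?_⟩
    intro y hy z hz
    obtain ⟨hzU, hz'⟩ := Finset.mem_sdiff.1 hz
    have hzx : φ z ≠ φ x := fun h => hz' (Finset.mem_filter.2 ⟨hzU, h⟩)
    have : z ∈ Nn x j := by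
      refine Finset.mem_filter.2 ⟨hzU, hzx, (hij z hzU hzx).resolve_left (fun h => ?_)⟩
      have : z ∈ Nn x i := Finset.mem_filter.2 ⟨hzU, hzx, h⟩
      rw [hemp] at this
      simp at this
    exact (hhom x hx j y hy z this).2
  have hNa : ∀ x ∈ U, (Nn x a).Nonempty := fun x hx =>
    hne x hx a b (fun y hy h => (hφ x hx y hy (Ne.symm h)).2)
  have hNb : ∀ x ∈ U, (Nn x b).Nonempty := fun x hx =>
    hne x hx b a (fun y hy h => (hφ x hx y hy (Ne.symm h)).2.symm)
  have hab : a ≠ b := by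
    rintro rfl
    refine hsplit ⟨a, Pt p, hPU p, ⟨p, Finset.mem_filter.2 ⟨hp, rfl⟩⟩, hrest p hp, ?_⟩
    intro y hy z hz
    obtain ⟨hzU, hz'⟩ := Finset.mem_sdiff.1 hz
    have hzx : φ z ≠ φ p := fun h => hz' (Finset.mem_filter.2 ⟨hzU, h⟩)
    obtain ⟨hyU, hyx⟩ := Finset.mem_filter.1 hy
    rcases (hφ y hyU z hzU (by rw [hyx]; exact hzx.symm)).2 with h | h <;> exact h
  -- no level-one colors among a, b
  have hlev : ∀ i j, (∀ x ∈ U, ∀ y ∈ U, φ x ≠ φ y → c x y = i ∨ c x y = j) →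
      (∀ x ∈ U, (Nn x i).Nonempty) → (∀ x ∈ U, (Nn x j).Nonempty) → i ≠ j → t i ≠ 1 := by
    intro i j hij hi hj hne' h1
    have hf := hfree i
    rw [h1] at hf
    have hle : ∀ x ∈ U, (Nn x i).card ≤ 1 := by
      intro x hx
      by_contra h
      refine hf ⟨x, hx, ?_⟩
      have hsub : Nn x i ⊆ nb c i U x := by
        intro z hz
        obtain ⟨hzU, hzx, hzi⟩ := Finset.mem_filter.1 hz
        exact mem_nb.2 ⟨hzU, by rintro rfl; exact hzx rfl, hzi⟩
      exact (by omega : 2 ≤ (Nn x i).card).trans (Finset.card_le_card hsub)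
    have hPle : ∀ x ∈ U, ∀ y ∈ Pt x, y = x := by
      intro x hx y hy
      by_contra hyx
      obtain ⟨z, hz⟩ := hi x hx
      refine hf (bad_one (hNU x i hz) hx (hPU x hy) ?_ ?_ (Ne.symm hyx) ?_ ?_)
      · exact (hhom x hx i x (Finset.mem_filter.2 ⟨hx, rfl⟩) z hz).1.symm
      · exact (hhom x hx i y hy z hz).1.symm
      · rw [hc.1]; exact (hhom x hx i x (Finset.mem_filter.2 ⟨hx, rfl⟩) z hz).2
      · rw [hc.1]; exact (hhom x hx i y hy z hz).2
    obtain ⟨y, hy⟩ := hi p hp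
    obtain ⟨hyU, hyp, hyi⟩ := Finset.mem_filter.1 hy
    have hpy : p ∈ Nn y i := Finset.mem_filter.2 ⟨hp, Ne.symm hyp, by rw [hc.1]; exact hyi⟩
    have hcol : ∀ x ∈ U, ∀ w ∈ Nn x i, ∀ z ∈ U, z ≠ x → z ≠ w → c x z = j := by
      intro x hx w hw z hz hzx hzw
      have hφz : φ z ≠ φ x := fun h => hzx (hPle x hx z (Finset.mem_filter.2 ⟨hz, h⟩))
      refine (hij x hx z hz (Ne.symm hφz)).resolve_left (fun h => hzw ?_)
      exact Finset.card_le_one.1 (hle x hx) z (Finset.mem_filter.2 ⟨hz, hφz, h⟩) w hw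
    refine hsplit ⟨j, {p, y}, ?_, ⟨p, by simp⟩, ?_, ?_⟩
    · intro z hz
      rcases Finset.mem_insert.1 hz with rfl | hz
      · exact hp
      · rw [Finset.mem_singleton] at hz; rw [hz]; exact hyU
    · obtain ⟨z, hz⟩ := hj p hp
      obtain ⟨hzU, hzp, hzj⟩ := Finset.mem_filter.1 hz
      refine ⟨z, Finset.mem_sdiff.2 ⟨hzU, ?_⟩⟩
      simp only [Finset.mem_insert, Finset.mem_singleton, not_or]
      refine ⟨by rintro rfl; exact hzp rfl, ?_⟩
      rintro rfl
      exact hne' (hyi.symm.trans hzj)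
    · intro x hx z hz
      obtain ⟨hzU, hz'⟩ := Finset.mem_sdiff.1 hz
      simp only [Finset.mem_insert, Finset.mem_singleton, not_or] at hz' hx
      rcases hx with rfl | rfl
      · exact hcol x hp y hy z hzU hz'.1 hz'.2
      · exact hcol x hyU p hpy z hzU hz'.2 hz'.1
  have hta := hlev a b (fun x hx y hy h => (hφ x hx y hy h).2) hNa hNb hab
  have htb := hlev b a (fun x hx y hy h => (hφ x hx y hy h).2.symm) hNb hNa hab.symm
  have hta' : t a = 2 ∨ t a = 3 := by have := ht a; omega
  have htb' : t b = 2 ∨ t b = 3 := by have := ht b; omega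
  set M := ∏ i ∈ (Finset.univ.erase b).erase a, g (t i) with hMdef
  have hM : 1 ≤ M := prod_ge_one _ t
  have hlast : ∏ i, g (t i) = M * (g (t a) * g (t b)) := by
    have := prod_two t hab (t a) (t b)
    rwa [Function.update_eq_self, Function.update_eq_self] at this
  rw [hlast, ← mul_assoc]
  have bound : ∀ Y ⊆ U, Y.card < U.card → ∀ x y, 1 ≤ x → x ≤ 3 → 1 ≤ y → y ≤ 3 →
      ¬ Bad c a x Y → ¬ Bad c b y Y → (Y.card : ℝ) ≤ 2 * M * (g x * g y) := by
    intro Y hYU hYc x y hx1 hx3 hy1 hy3 hbx hby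
    have := IH Y hYU hYc (Function.update (Function.update t a x) b y) ?_ ?_
    · rw [prod_two t hab, ← mul_assoc] at this
      exact this
    · intro i
      by_cases hi : i = b
      · subst hi; rw [Function.update_self]; exact ⟨hy1, hy3⟩
      · rw [Function.update_of_ne hi]
        by_cases hi' : i = a
        · subst hi'; rw [Function.update_self]; exact ⟨hx1, hx3⟩
        · rw [Function.update_of_ne hi']; exact ht i
    · intro i
      by_cases hi : i = b
      · subst hi; rw [Function.update_self]; exact hby
      · rw [Function.update_of_ne hi]
        by_cases hi' : i = a
        · subst hi'; rw [Function.update_self]; exact hbx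
        · rw [Function.update_of_ne hi']; exact fun h => hfree i (h.mono hYU)
  have ltU : ∀ Y ⊆ U, ∀ z ∈ U, z ∉ Y → Y.card < U.card := by
    intro Y hY z hz hzY
    exact Finset.card_lt_card ⟨hY, fun h => hzY (h hz)⟩
  have ltP : ∀ x ∈ U, (Pt x).card < U.card := by
    intro x hx
    obtain ⟨z, hz⟩ := hrest x hx
    exact ltU _ (hPU x) z (Finset.mem_sdiff.1 hz).1 (Finset.mem_sdiff.1 hz).2
  have ltN : ∀ x ∈ U, ∀ i, (Nn x i).card < U.card := by
    intro x hx i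
    exact ltU _ (hNU x i) x hx (fun h => (Finset.mem_filter.1 h).2.1 rfl)
  have cover : ∀ x ∈ U, U.card ≤ (Pt x).card + (Nn x a).card + (Nn x b).card := by
    intro x hx
    have hsub : U ⊆ (Pt x ∪ Nn x a) ∪ Nn x b := by
      intro y hy
      by_cases h : φ y = φ x
      · exact Finset.mem_union_left _ (Finset.mem_union_left _ (Finset.mem_filter.2 ⟨hy, h⟩))
      · rcases (hφ x hx y hy (Ne.symm h)).2 with h' | h'
        · exact Finset.mem_union_left _ (Finset.mem_union_right _ (Finset.mem_filter.2 ⟨hy, h, h'⟩))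
        · exact Finset.mem_union_right _ (Finset.mem_filter.2 ⟨hy, h, h'⟩)
    have h1 := Finset.card_le_card hsub
    have h2 := Finset.card_union_le (Pt x ∪ Nn x a) (Nn x b)
    have h3 := Finset.card_union_le (Pt x) (Nn x a)
    omega
  by_cases hae : ∃ x ∈ U, ∃ u ∈ Pt x, ∃ v ∈ Pt x, v ≠ u ∧ c u v = a
  · obtain ⟨x, hx, hedge⟩ := hae
    refine edge_case hc.1 hM hta' htb' (hfree a) (hfree b) (hPU x) (hNU x a) (hNU x b)
      (hNa x hx) (hNb x hx) (cover x hx) (hhom x hx a) (hhom x hx b) ?_ hedge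
    rintro Y (rfl | rfl | rfl)
    · exact bound _ (hPU x) (ltP x hx)
    · exact bound _ (hNU x a) (ltN x hx a)
    · exact bound _ (hNU x b) (ltN x hx b)
  by_cases hbe : ∃ x ∈ U, ∃ u ∈ Pt x, ∃ v ∈ Pt x, v ≠ u ∧ c u v = b
  · obtain ⟨x, hx, hedge⟩ := hbe
    rw [mul_comm (g (t a))]
    refine edge_case hc.1 hM htb' hta' (hfree b) (hfree a) (hPU x) (hNU x b) (hNU x a)
      (hNb x hx) (hNa x hx) (by have := cover x hx; omega) (hhom x hx b) (hhom x hx a) ?_ hedge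
    rintro Y hY y' x' h1 h2 h3 h4 h5 h6
    rw [mul_comm (g y')]
    rcases hY with rfl | rfl | rfl
    · exact bound _ (hPU x) (ltP x hx) x' y' h3 h4 h1 h2 h6 h5
    · exact bound _ (hNU x b) (ltN x hx b) x' y' h3 h4 h1 h2 h6 h5
    · exact bound _ (hNU x a) (ltN x hx a) x' y' h3 h4 h1 h2 h6 h5
  push Not at hae hbe
  refine clean_case hc.1 hM hta' htb' (hfree a) (hfree b) hφ ?_ ?_
  · intro x hx y hy hxy hφxy
    exact ⟨hae x hx x (Finset.mem_filter.2 ⟨hx, rfl⟩) y (Finset.mem_filter.2 ⟨hy, hφxy.symm⟩)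
      hxy.symm, hbe x hx x (Finset.mem_filter.2 ⟨hx, rfl⟩) y
      (Finset.mem_filter.2 ⟨hy, hφxy.symm⟩) hxy.symm⟩
  · intro r
    by_cases hr : ∃ x ∈ U, φ x = r
    · obtain ⟨x, hx, rfl⟩ := hr
      have := bound (Pt x) (hPU x) (ltP x hx) 1 1 (by norm_num) (by norm_num) (by norm_num)
        (by norm_num)
        (not_bad_one_of_no_edge (fun u hu v hv huv => hae x hx u hu v hv huv.symm))
        (not_bad_one_of_no_edge (fun u hu v hv huv => hbe x hx u hu v hv huv.symm))
      rw [g_one, mul_one, mul_one] at this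
      exact this
    · push Not at hr
      rw [Finset.filter_eq_empty_iff.2 (fun {x} hx => hr x hx)]
      simp only [Finset.card_empty, Nat.cast_zero]
      linarith

end Main

section Lower

/-- no monochromatic path on three vertices in color `i` -/
def P3f {V κ : Type*} (c : V → V → κ) (i : κ) : Prop :=
  ∀ x y z, x ≠ y → x ≠ z → y ≠ z → c x y = i → c y z = i → False

/-- no monochromatic triangle in color `i` -/
def K3f {V κ : Type*} (c : V → V → κ) (i : κ) : Prop :=
  ∀ x y z, x ≠ y → x ≠ z → y ≠ z → c x y = i → c x z = i → c y z = i → False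

/-- no monochromatic complete graph on four vertices in color `i` -/
def K4f {V κ : Type*} (c : V → V → κ) (i : κ) : Prop :=
  ∀ x y z w, x ≠ y → x ≠ z → x ≠ w → y ≠ z → y ≠ w → z ≠ w →
    c x y = i → c x z = i → c x w = i → c y z = i → c y w = i → c z w = i → False

/-- lexicographic product coloring -/
def lex {α β κ : Type*} [DecidableEq β] (d : β → β → κ) (c : α → α → κ) :
    β × α → β × α → κ :=
  fun p q => if p.1 = q.1 then c p.2 q.2 else d p.1 q.1

variable {α β : Type} [DecidableEq β] {d : β → β → ℕ} {c : α → α → ℕ}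

theorem lex_cases {p q : β × α} {i : ℕ} (hpq : p ≠ q) (h : lex d c p q = i) :
    (p.1 = q.1 ∧ p.2 ≠ q.2 ∧ c p.2 q.2 = i) ∨ (p.1 ≠ q.1 ∧ d p.1 q.1 = i) := by
  unfold lex at h
  by_cases h1 : p.1 = q.1
  · left
    rw [if_pos h1] at h
    exact ⟨h1, fun h2 => hpq (Prod.ext h1 h2), h⟩
  · right
    rw [if_neg h1] at h
    exact ⟨h1, h⟩

theorem lex_gal (hd : Gal d) (hc : Gal c) : Gal (lex d c) := by
  refine ⟨?_, ?_⟩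
  · intro p q
    unfold lex
    by_cases h1 : p.1 = q.1
    · rw [if_pos h1, if_pos h1.symm, hc.1]
    · rw [if_neg h1, if_neg (Ne.symm h1), hd.1]
  · rintro ⟨x, u⟩ ⟨y, v⟩ ⟨z, w⟩ h1 h2 h3
    have hs := hd.1
    unfold lex
    dsimp only
    by_cases hxy : x = y
    · subst hxy
      by_cases hxz : x = z
      · subst hxz
        simp only [if_true]
        exact hc.2 u v w (by rintro rfl; exact h1 rfl) (by rintro rfl; exact h2 rfl)
          (by rintro rfl; exact h3 rfl)
      · simp [hxz]
    · by_cases hxz : x = z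
      · subst hxz
        simp only [if_neg hxy, if_neg (Ne.symm hxy)]
        right; left; exact hs _ _
      · by_cases hyz : y = z
        · subst hyz
          simp [hxy]
        · simp only [if_neg hxy, if_neg hxz, if_neg hyz]
          exact hd.2 x y z hxy hxz hyz

theorem lex_P3f {i : ℕ} (hdis : ∀ x y, x ≠ y → d x y ≠ i) (hc : P3f c i) :
    P3f (lex d c) i := by
  intro x y z h1 h2 h3 e1 e2
  rcases lex_cases h1 e1 with ⟨a1, a2, a3⟩ | ⟨a1, a2⟩
  · rcases lex_cases h3 e2 with ⟨b1, b2, b3⟩ | ⟨b1, b2⟩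
    · exact hc _ _ _ a2 (fun h => h2 (Prod.ext (a1.trans b1) h)) b2 a3 b3
    · exact hdis _ _ b1 b2
  · exact hdis _ _ a1 a2

theorem lex_K3f {i : ℕ} (hdis : (∀ x y, x ≠ y → d x y ≠ i) ∨ (∀ u v, u ≠ v → c u v ≠ i))
    (hd : K3f d i) (hc : K3f c i) : K3f (lex d c) i := by
  intro x y z h1 h2 h3 e1 e2 e3
  rcases hdis with hdis | hdis
  · rcases lex_cases h1 e1 with ⟨a1, a2, a3⟩ | ⟨a1, a2⟩
    swap; · exact hdis _ _ a1 a2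
    rcases lex_cases h2 e2 with ⟨b1, b2, b3⟩ | ⟨b1, b2⟩
    swap; · exact hdis _ _ b1 b2
    rcases lex_cases h3 e3 with ⟨c1, c2, c3⟩ | ⟨c1, c2⟩
    swap; · exact hdis _ _ c1 c2
    exact hc _ _ _ a2 b2 c2 a3 b3 c3
  · rcases lex_cases h1 e1 with ⟨a1, a2, a3⟩ | ⟨a1, a2⟩
    · exact hdis _ _ a2 a3
    rcases lex_cases h2 e2 with ⟨b1, b2, b3⟩ | ⟨b1, b2⟩
    · exact hdis _ _ b2 b3
    rcases lex_cases h3 e3 with ⟨c1, c2, c3⟩ | ⟨c1, c2⟩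
    · exact hdis _ _ c2 c3
    exact hd _ _ _ a1 b1 c1 a2 b2 c2

theorem lex_K4f {i : ℕ} (hdis : (∀ x y, x ≠ y → d x y ≠ i) ∨ (∀ u v, u ≠ v → c u v ≠ i))
    (hd : K4f d i) (hc : K4f c i) : K4f (lex d c) i := by
  intro x y z w h1 h2 h3 h4 h5 h6 e1 e2 e3 e4 e5 e6
  rcases hdis with hdis | hdis
  · have key : ∀ p q, p ≠ q → lex d c p q = i → p.2 ≠ q.2 ∧ c p.2 q.2 = i := by
      intro p q h e
      rcases lex_cases h e with ⟨a1, a2, a3⟩ | ⟨a1, a2⟩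
      · exact ⟨a2, a3⟩
      · exact absurd a2 (hdis _ _ a1)
    exact hc _ _ _ _ (key _ _ h1 e1).1 (key _ _ h2 e2).1 (key _ _ h3 e3).1 (key _ _ h4 e4).1
      (key _ _ h5 e5).1 (key _ _ h6 e6).1 (key _ _ h1 e1).2 (key _ _ h2 e2).2
      (key _ _ h3 e3).2 (key _ _ h4 e4).2 (key _ _ h5 e5).2 (key _ _ h6 e6).2
  · have key : ∀ p q, p ≠ q → lex d c p q = i → p.1 ≠ q.1 ∧ d p.1 q.1 = i := by
      intro p q h e
      rcases lex_cases h e with ⟨a1, a2, a3⟩ | ⟨a1, a2⟩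
      · exact absurd a3 (hdis _ _ a2)
      · exact ⟨a1, a2⟩
    exact hd _ _ _ _ (key _ _ h1 e1).1 (key _ _ h2 e2).1 (key _ _ h3 e3).1 (key _ _ h4 e4).1
      (key _ _ h5 e5).1 (key _ _ h6 e6).1 (key _ _ h1 e1).2 (key _ _ h2 e2).2
      (key _ _ h3 e3).2 (key _ _ h4 e4).2 (key _ _ h5 e5).2 (key _ _ h6 e6).2

/-- quadratic residues modulo 5 -/
def q5 (x : Fin 5) : Bool := x = 1 || x = 4

/-- quadratic residues modulo 17 -/
def q17 (x : Fin 17) : Bool :=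
  x = 1 || x = 2 || x = 4 || x = 8 || x = 9 || x = 13 || x = 15 || x = 16

/-- two-coloring from a boolean function -/
def two {β : Type} (D : β → β → Bool) (p : ℕ) : β → β → ℕ :=
  fun x y => if D x y then p else p + 1

theorem two_gal {D : β → β → Bool} (h : ∀ x y, D x y = D y x) (p : ℕ) : Gal (two D p) := by
  refine ⟨fun x y => by simp [two, h x y], fun x y z _ _ _ => ?_⟩
  unfold two
  cases D x y <;> cases D x z <;> cases D y z <;> simp

theorem two_eq {D : β → β → Bool} {p i : ℕ} {x y : β} (h : two D p x y = i) :
    (i = p ∨ i = p + 1) ∧ D x y = decide (i = p) := by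
  unfold two at h
  cases hD : D x y <;> simp [hD] at h <;> subst h <;> simp

theorem q5_symm : ∀ x y : Fin 5, q5 (x - y) = q5 (y - x) := by decide
theorem q17_symm : ∀ x y : Fin 17, q17 (x - y) = q17 (y - x) := by decide +kernel

theorem q5_K3 : ∀ b : Bool, ∀ x y z : Fin 5, x ≠ y → x ≠ z → y ≠ z → q5 (x - y) = b →
    q5 (x - z) = b → q5 (y - z) = b → False := by decide +kernel

theorem q17_K4_zero : ∀ b : Bool, ∀ y : Fin 17, 0 ≠ y → q17 (0 - y) = b →
    ∀ z : Fin 17, 0 ≠ z → y ≠ z → q17 (0 - z) = b → q17 (y - z) = b →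
    ∀ w : Fin 17, 0 ≠ w → y ≠ w → z ≠ w → q17 (0 - w) = b → q17 (y - w) = b →
    q17 (z - w) = b → False := by decide +kernel

theorem two5_K3f (p i : ℕ) : K3f (two (fun x y => q5 (x - y)) p) i := by
  intro x y z h1 h2 h3 e1 e2 e3
  exact q5_K3 _ x y z h1 h2 h3 (two_eq e1).2 (two_eq e2).2 (two_eq e3).2

theorem two17_K4f (p i : ℕ) : K4f (two (fun x y => q17 (x - y)) p) i := by
  intro x y z w h1 h2 h3 h4 h5 h6 e1 e2 e3 e4 e5 e6
  have e1 := (two_eq e1).2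
  have e2 := (two_eq e2).2
  have e3 := (two_eq e3).2
  have e4 := (two_eq e4).2
  have e5 := (two_eq e5).2
  have e6 := (two_eq e6).2
  have n : ∀ a : Fin 17, x ≠ a → 0 ≠ a - x := fun a h h' => h (sub_eq_zero.mp h'.symm).symm
  have n' : ∀ a b : Fin 17, a ≠ b → a - x ≠ b - x := fun a b h h' => h (sub_left_inj.mp h')
  have z0 : ∀ a : Fin 17, 0 - (a - x) = x - a := fun a => by abel
  have zz : ∀ a b : Fin 17, (a - x) - (b - x) = a - b := fun a b => by abel
  refine q17_K4_zero (decide (i = p)) (y - x) (n _ h1) ?_ (z - x) (n _ h2) (n' _ _ h4) ?_ ?_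
    (w - x) (n _ h3) (n' _ _ h5) (n' _ _ h6) ?_ ?_ ?_
  · rw [z0]; exact e1
  · rw [z0]; exact e2
  · rw [zz]; exact e4
  · rw [z0]; exact e3
  · rw [zz]; exact e5
  · rw [zz]; exact e6

/-- the invariant of the construction -/
def LB (R S a b : ℕ) (α : Type) (c : α → α → ℕ) : Prop :=
  Gal c ∧ (∀ u v, c u v < 2 * a ∨ (R ≤ c u v ∧ c u v < R + 2 * b) ∨ c u v = R + S) ∧
  (∀ i, i < R → K4f c i) ∧ (∀ i, R ≤ i → i < R + S → K3f c i) ∧ (∀ i, R + S ≤ i → P3f c i)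

theorem K3f_of_unused {V : Type} {c : V → V → ℕ} {i : ℕ} (h : ∀ x y, x ≠ y → c x y ≠ i) :
    K3f c i := fun x y _ h1 _ _ e _ _ => h x y h1 e

theorem K4f_of_unused {V : Type} {c : V → V → ℕ} {i : ℕ} (h : ∀ x y, x ≠ y → c x y ≠ i) :
    K4f c i := fun x y _ _ h1 _ _ _ _ _ e _ _ _ _ _ => h x y h1 e

theorem LB_five {R S b : ℕ} (h : 2 * (b + 1) ≤ S) {α : Type} {c : α → α → ℕ}
    (hc : LB R S 0 b α c) :
    LB R S 0 (b + 1) (Fin 5 × α) (lex (two (fun x y => q5 (x - y)) (R + 2 * b)) c) := by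
  obtain ⟨h1, h2, h3, h4, h5⟩ := hc
  have hd : ∀ i, i ≠ R + 2 * b → i ≠ R + 2 * b + 1 → ∀ x y : Fin 5, x ≠ y →
      two (fun x y => q5 (x - y)) (R + 2 * b) x y ≠ i := by
    intro i a1 a2 x y _ e
    rcases (two_eq e).1 with e | e <;> omega
  refine ⟨lex_gal (two_gal q5_symm _) h1, ?_, ?_, ?_, ?_⟩
  · intro p q
    unfold lex
    split_ifs
    · have := h2 p.2 q.2
      omega
    · rcases (two_eq (D := fun x y : Fin 5 => q5 (x - y)) (p := R + 2 * b) (x := p.1) (y := q.1) rfl).1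
        with e | e <;> omega
  · intro i hi
    have := hd i (by omega) (by omega)
    exact lex_K4f (Or.inl this) (K4f_of_unused this) (h3 i hi)
  · intro i hi hi'
    refine lex_K3f ?_ (two5_K3f _ _) (h4 i hi hi')
    by_cases e : i = R + 2 * b ∨ i = R + 2 * b + 1
    · right
      intro u v _ e'
      have := h2 u v
      omega
    · left
      exact hd i (by tauto) (by tauto)
  · intro i hi
    exact lex_P3f (hd i (by omega) (by omega)) (h5 i hi)

theorem LB_seventeen {R S a b : ℕ} (h : 2 * (a + 1) ≤ R) {α : Type} {c : α → α → ℕ}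
    (hc : LB R S a b α c) :
    LB R S (a + 1) b (Fin 17 × α) (lex (two (fun x y => q17 (x - y)) (2 * a)) c) := by
  obtain ⟨h1, h2, h3, h4, h5⟩ := hc
  have hd : ∀ i, i ≠ 2 * a → i ≠ 2 * a + 1 → ∀ x y : Fin 17, x ≠ y →
      two (fun x y => q17 (x - y)) (2 * a) x y ≠ i := by
    intro i a1 a2 x y _ e
    rcases (two_eq e).1 with e | e <;> omega
  refine ⟨lex_gal (two_gal q17_symm _) h1, ?_, ?_, ?_, ?_⟩
  · intro p q
    unfold lex
    split_ifs
    · have := h2 p.2 q.2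
      omega
    · rcases (two_eq (D := fun x y : Fin 17 => q17 (x - y)) (p := 2 * a) (x := p.1) (y := q.1) rfl).1
        with e | e <;> omega
  · intro i hi
    refine lex_K4f ?_ (two17_K4f _ _) (h3 i hi)
    by_cases e : i = 2 * a ∨ i = 2 * a + 1
    · right
      intro u v _ e'
      have := h2 u v
      omega
    · left
      exact hd i (by tauto) (by tauto)
  · intro i hi hi'
    have := hd i (by omega) (by omega)
    exact lex_K3f (Or.inl this) (K3f_of_unused this) (h4 i hi hi')
  · intro i hi
    exact lex_P3f (hd i (by omega) (by omega)) (h5 i hi)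

theorem LB_zero (R S : ℕ) : LB R S 0 0 (Fin 2) (fun _ _ => R + S) := by
  refine ⟨⟨fun _ _ => rfl, fun _ _ _ _ _ _ => Or.inl rfl⟩, ?_, ?_, ?_, ?_⟩
  · intro u v; right; right; rfl
  · intro i hi; exact K4f_of_unused (fun _ _ _ => by omega)
  · intro i hi hi'; exact K3f_of_unused (fun _ _ _ => by omega)
  · intro i hi x y z h1 h2 h3 _ _
    omega

theorem LB_b (R S : ℕ) : ∀ b, 2 * b ≤ S → ∃ (α : Type) (_ : Fintype α) (c : α → α → ℕ),
    Fintype.card α = 2 * 5 ^ b ∧ LB R S 0 b α c := by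
  intro b
  induction b with
  | zero => intro _; exact ⟨Fin 2, inferInstance, _, by simp, LB_zero R S⟩
  | succ b ih =>
    intro hb
    obtain ⟨α, _, c, hcard, hc⟩ := ih (by omega)
    refine ⟨Fin 5 × α, inferInstance, _, ?_, LB_five hb hc⟩
    rw [Fintype.card_prod, hcard, Fintype.card_fin]
    ring

theorem LB_ab (R S b : ℕ) (hb : 2 * b ≤ S) : ∀ a, 2 * a ≤ R →
    ∃ (α : Type) (_ : Fintype α) (c : α → α → ℕ),
    Fintype.card α = 2 * 5 ^ b * 17 ^ a ∧ LB R S a b α c := by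
  intro a
  induction a with
  | zero =>
    intro _
    obtain ⟨α, i, c, hcard, hc⟩ := LB_b R S b hb
    exact ⟨α, i, c, by simpa using hcard, hc⟩
  | succ a ih =>
    intro ha
    obtain ⟨α, _, c, hcard, hc⟩ := ih (by omega)
    refine ⟨Fin 17 × α, inferInstance, _, ?_, LB_seventeen ha hc⟩
    rw [Fintype.card_prod, hcard, Fintype.card_fin]
    ring

end Lower

section Final

theorem gal_of_gallai {n k : ℕ} {c : Fin n → Fin n → Fin k} (h : IsGallaiColoring c) :
    Gal c := by
  refine ⟨h.1, fun u v w h1 h2 h3 => ?_⟩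
  by_contra hcon
  push Not at hcon
  exact h.2 ⟨u, v, w, h1, h2, h3, hcon.1, hcon.2.1, hcon.2.2⟩

theorem copy_P3 {n k : ℕ} {c : Fin n → Fin n → Fin k} (h : IsGallaiColoring c) {i : Fin k}
    {U : Finset (Fin n)} (hb : Bad c i 1 U) : HasMonoCopy GP3 c i := by
  obtain ⟨x, hx, hb⟩ := hb
  obtain ⟨y, hy, z, hz, hyz⟩ := Finset.one_lt_card.mp (show 1 < (nb c i U x).card from hb)
  rw [mem_nb] at hy hz
  have s := h.1
  refine ⟨![y, x, z], ?_, ?_⟩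
  · intro a b hab
    fin_cases a <;> fin_cases b <;> simp_all
  · intro a b hab
    have h1 := hy.2.2
    have h2 := hz.2.2
    have h3 := s y x
    have h4 := s z x
    fin_cases a <;> fin_cases b <;> simp_all [GP3]

theorem copy_K3 {n k : ℕ} {c : Fin n → Fin n → Fin k} (h : IsGallaiColoring c) {i : Fin k}
    {U : Finset (Fin n)} (hb : Bad c i 2 U) : HasMonoCopy GK3 c i := by
  obtain ⟨x, hx, y, hy, hb⟩ := hb
  obtain ⟨z, hz, -⟩ := Finset.one_lt_card.mp (show 1 < (nb c i (nb c i U x) y).card from hb)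
  simp only [mem_nb] at hy hz
  obtain ⟨⟨-, hzx, e1⟩, hzy, e2⟩ := hz
  obtain ⟨-, hyx, e3⟩ := hy
  have s1 := h.1 z x
  have s2 := h.1 z y
  have s3 := h.1 y x
  refine ⟨![x, y, z], ?_, ?_⟩
  · intro a b hab
    fin_cases a <;> fin_cases b <;> simp_all
  · intro a b hab
    fin_cases a <;> fin_cases b <;> simp_all [GK3]

theorem copy_H3 {n k : ℕ} {c : Fin n → Fin n → Fin k} (h : IsGallaiColoring c) {i : Fin k}
    {U : Finset (Fin n)} (hb : Bad c i 3 U) : HasMonoCopy GH3 c i := by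
  obtain ⟨x, hx, y, hy, z, hz, hb⟩ := hb
  obtain ⟨u, hu, v, hv, huv⟩ :=
    Finset.one_lt_card.mp (show 1 < (nb c i (nb c i (nb c i U x) y) z).card from hb)
  simp only [mem_nb] at hy hz hu hv
  obtain ⟨⟨⟨-, hux, e1⟩, huy, e2⟩, huz, e3⟩ := hu
  obtain ⟨⟨⟨-, hvx, e4⟩, hvy, e5⟩, hvz, e6⟩ := hv
  obtain ⟨⟨-, hzx, e7⟩, hzy, e8⟩ := hz
  obtain ⟨-, hyx, e9⟩ := hy
  have s1 := (h.1 u x).trans e1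
  have s2 := (h.1 u y).trans e2
  have s3 := (h.1 u z).trans e3
  have s4 := (h.1 v x).trans e4
  have s5 := (h.1 v y).trans e5
  have s6 := (h.1 v z).trans e6
  have s7 := (h.1 z x).trans e7
  have s8 := (h.1 z y).trans e8
  have s9 := (h.1 y x).trans e9
  clear hb hx h
  refine ⟨![u, v, x, y, z], ?_, ?_⟩
  · intro a b hab
    have t1 := hux.symm
    have t2 := huy.symm
    have t3 := huz.symm
    have t4 := hvx.symm
    have t5 := hvy.symm
    have t6 := hvz.symm
    have t7 := hzx.symm
    have t8 := hzy.symm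
    have t9 := hyx.symm
    have t10 := huv.symm
    clear e1 e2 e3 e4 e5 e6 e7 e8 e9 s1 s2 s3 s4 s5 s6 s7 s8 s9
    fin_cases a <;> fin_cases b <;> first | rfl | (exfalso; simp at hab; contradiction)
  · intro a b hab
    fin_cases a <;> fin_cases b <;> first | assumption | (exfalso; revert hab; simp [GH3])

theorem copy_P3f {n k : ℕ} {c : Fin n → Fin n → Fin k} {i : Fin k} (h : P3f c i) :
    ¬ HasMonoCopy GP3 c i := by
  rintro ⟨f, hf, hm⟩
  exact h (f 0) (f 1) (f 2) (hf.ne (by decide)) (hf.ne (by decide)) (hf.ne (by decide))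
    (hm _ _ (by simp [GP3])) (hm _ _ (by simp [GP3]))

theorem copy_K3f {n k : ℕ} {c : Fin n → Fin n → Fin k} {i : Fin k} (h : K3f c i) :
    ¬ HasMonoCopy GK3 c i := by
  rintro ⟨f, hf, hm⟩
  exact h (f 0) (f 1) (f 2) (hf.ne (by decide)) (hf.ne (by decide)) (hf.ne (by decide))
    (hm _ _ (by simp [GK3])) (hm _ _ (by simp [GK3])) (hm _ _ (by simp [GK3]))

theorem copy_K4f {n k : ℕ} {c : Fin n → Fin n → Fin k} {i : Fin k} (h : K4f c i) :
    ¬ HasMonoCopy GH3 c i := by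
  rintro ⟨f, hf, hm⟩
  exact h (f 1) (f 2) (f 3) (f 4) (hf.ne (by decide)) (hf.ne (by decide)) (hf.ne (by decide))
    (hf.ne (by decide)) (hf.ne (by decide)) (hf.ne (by decide))
    (hm _ _ (by simp [GH3])) (hm _ _ (by simp [GH3])) (hm _ _ (by simp [GH3]))
    (hm _ _ (by simp [GH3])) (hm _ _ (by simp [GH3])) (hm _ _ (by simp [GH3]))

theorem mix_copy_iff {k s r n : ℕ} {c : Fin n → Fin n → Fin k} {i : Fin k} :
    HasMonoCopy (mixPKH k s r i).2 c i ↔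
      ((i : ℕ) < r ∧ HasMonoCopy GH3 c i) ∨
      (¬ (i : ℕ) < r ∧ (i : ℕ) < r + s ∧ HasMonoCopy GK3 c i) ∨
      (¬ (i : ℕ) < r ∧ ¬ (i : ℕ) < r + s ∧ HasMonoCopy GP3 c i) := by
  by_cases h1 : (i : ℕ) < r
  · have : mixPKH k s r i = ⟨Fin 5, GH3⟩ := by simp [mixPKH, h1]
    rw [this]
    simp [h1]
  · by_cases h2 : (i : ℕ) < r + s
    · have : mixPKH k s r i = ⟨Fin 3, GK3⟩ := by simp [mixPKH, h1, h2]
      rw [this]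
      simp [h1, h2]
    · have : mixPKH k s r i = ⟨Fin 3, GP3⟩ := by simp [mixPKH, h1, h2]
      rw [this]
      simp [h1, h2]

/-- the parameter attached to each color -/
def tt (s r i : ℕ) : ℕ := if i < r then 3 else if i < r + s then 2 else 1

theorem prod_tt (k a b : ℕ) (h : 2 * b + 2 * a < k) :
    ∏ i : Fin k, g (tt (2 * b) (2 * a) i) = 5 ^ b * 17 ^ a := by
  rw [Fin.prod_univ_eq_prod_range (fun i => g (tt (2 * b) (2 * a) i)) k]
  obtain ⟨m, rfl⟩ : ∃ m, k = 2 * a + 2 * b + m := ⟨k - (2 * a + 2 * b), by omega⟩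
  rw [Finset.prod_range_add, Finset.prod_range_add]
  have e1 : ∏ x ∈ Finset.range (2 * a), g (tt (2 * b) (2 * a) x) = 17 ^ a := by
    rw [Finset.prod_congr rfl (g := fun _ => √17), Finset.prod_const, Finset.card_range, pow_mul,
      pow_two, s17_sq]
    intro x hx
    rw [Finset.mem_range] at hx
    rw [tt, if_pos hx, g_three]
  have e2 : ∏ x ∈ Finset.range (2 * b), g (tt (2 * b) (2 * a) (2 * a + x)) = 5 ^ b := by
    rw [Finset.prod_congr rfl (g := fun _ => √5), Finset.prod_const, Finset.card_range, pow_mul,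
      pow_two, s5_sq]
    intro x hx
    rw [Finset.mem_range] at hx
    rw [tt, if_neg (by omega), if_pos (by omega), g_two]
  have e3 : ∏ x ∈ Finset.range m, g (tt (2 * b) (2 * a) (2 * a + 2 * b + x)) = 1 := by
    apply Finset.prod_eq_one
    intro x hx
    rw [tt, if_neg (by omega), if_neg (by omega), g_one]
  rw [e1, e2, e3]
  ring

theorem main_upper (k a b : ℕ) (h : 2 * b + 2 * a < k) {n : ℕ} (hn : 2 * 5 ^ b * 17 ^ a < n)
    (c : Fin n → Fin n → Fin k) (hc : IsGallaiColoring c) :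
    ∃ i : Fin k, HasMonoCopy (mixPKH k (2 * b) (2 * a) i).2 c i := by
  by_contra hcon
  push Not at hcon
  have := upper (gal_of_gallai hc) n Finset.univ (by simp)
    (fun i : Fin k => tt (2 * b) (2 * a) i) ?_ ?_
  · rw [prod_tt k a b h, Finset.card_univ, Fintype.card_fin, ← mul_assoc] at this
    have h2 : n ≤ 2 * 5 ^ b * 17 ^ a := by exact_mod_cast this
    omega
  · intro i
    dsimp only [tt]
    split_ifs <;> omega
  · intro i hb
    apply hcon i
    rw [mix_copy_iff]
    by_cases h1 : (i : ℕ) < 2 * a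
    · left
      simp only [tt, if_pos h1] at hb
      exact ⟨h1, copy_H3 hc hb⟩
    · by_cases h2 : (i : ℕ) < 2 * a + 2 * b
      · right; left
        simp only [tt, if_neg h1, if_pos h2] at hb
        exact ⟨h1, h2, copy_K3 hc hb⟩
      · right; right
        simp only [tt, if_neg h1, if_neg h2] at hb
        exact ⟨h1, h2, copy_P3 hc hb⟩

theorem main_lower (k a b : ℕ) (h : 2 * b + 2 * a < k) {n : ℕ} (hn : n ≤ 2 * 5 ^ b * 17 ^ a) :
    ∃ c : Fin n → Fin n → Fin k, IsGallaiColoring c ∧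
    ∀ i : Fin k, ¬ HasMonoCopy (mixPKH k (2 * b) (2 * a) i).2 c i := by
  obtain ⟨α, _, c, hcard, h1, h2, h3, h4, h5⟩ := LB_ab (2 * a) (2 * b) b le_rfl a le_rfl
  obtain ⟨e⟩ : Nonempty (Fin n ↪ α) :=
    Function.Embedding.nonempty_of_card_le (by rw [hcard, Fintype.card_fin]; exact hn)
  have hlt : ∀ u v, c u v < k := fun u v => by
    have := h2 u v
    omega
  have he : ∀ {x y}, x ≠ y → e x ≠ e y := fun h => e.injective.ne h
  let d : Fin n → Fin n → Fin k := fun x y => ⟨c (e x) (e y), hlt _ _⟩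
  have hv : ∀ {x y i}, d x y = i → c (e x) (e y) = (i : ℕ) := fun h => congrArg Fin.val h
  refine ⟨d, ⟨fun u v => Fin.ext (h1.1 _ _), ?_⟩, ?_⟩
  · rintro ⟨u, v, w, a1, a2, a3, b1, b2, b3⟩
    rcases h1.2 _ _ _ (he a1) (he a2) (he a3) with t | t | t
    · exact b1 (Fin.ext t)
    · exact b2 (Fin.ext t)
    · exact b3 (Fin.ext t)
  · intro i hm
    rw [mix_copy_iff] at hm
    rcases hm with ⟨m1, m⟩ | ⟨m1, m2, m⟩ | ⟨m1, m2, m⟩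
    · refine copy_K4f ?_ m
      intro x y z w g1 g2 g3 g4 g5 g6 e1 e2 e3 e4 e5 e6
      exact h3 i m1 _ _ _ _ (he g1) (he g2) (he g3) (he g4) (he g5) (he g6)
        (hv e1) (hv e2) (hv e3) (hv e4) (hv e5) (hv e6)
    · refine copy_K3f ?_ m
      intro x y z g1 g2 g3 e1 e2 e3
      exact h4 i (by omega) m2 _ _ _ (he g1) (he g2) (he g3) (hv e1) (hv e2) (hv e3)
    · refine copy_P3f ?_ m
      intro x y z g1 g2 g3 e1 e2
      exact h5 i (by omega) _ _ _ (he g1) (he g2) (he g3) (hv e1) (hv e2)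

end Final

end GRaux

/-- Theorem 1.5, case (b₂): s, r both even and s + r < k implies
GR_k((k-s-r)P₃, sK₃, rH₃) = 2·5^(s/2)·17^(r/2) + 1. -/
theorem GR_mixPKH_b2 (k s r : ℕ) (hk : 1 ≤ k) (hs : Even s) (hr : Even r)
    (hsr : s + r < k) :
    GR k (mixPKH k s r) = 2 * 5 ^ (s / 2) * 17 ^ (r / 2) + 1 := by
  obtain ⟨b, rfl⟩ := hs.two_dvd
  obtain ⟨a, rfl⟩ := hr.two_dvd
  rw [Nat.mul_div_cancel_left b (by norm_num), Nat.mul_div_cancel_left a (by norm_num)]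
  unfold GR
  apply le_antisymm
  · apply Nat.sInf_le
    intro c hc
    exact GRaux.main_upper k a b hsr (Nat.lt_succ_self _) c hc
  · apply le_csInf
    · exact ⟨2 * 5 ^ b * 17 ^ a + 1, fun c hc =>
        GRaux.main_upper k a b hsr (Nat.lt_succ_self _) c hc⟩
    · intro n hn
      by_contra hlt
      obtain ⟨c, hc, hno⟩ := GRaux.main_lower k a b hsr (n := n) (by omega)
      obtain ⟨i, hi⟩ := hn c hc
      exact hno i hi
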